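/- arXiv:1811.08946 — 5 statements merged into one kernel-verified Lean document; each statement's English description precedes it below -/
import Mathlib

section
/- Let k be a field, S a totally ordered set, and M a pointwise finite-dimensional indecomposable persistence module over S with M_x ≠ 0 for all x ∈ S. Then the structure map M_x → M_y is surjective for all x ≤ y in S. -/
namespace PMod

variable (k : Type) [Field k]

/-- A persistence module over a preordered set `P` with values in `k`-vector spaces. -/
structure PersistenceModule (P : Type) [Preorder P] where
  V : P → Type
  [addCommGroup : ∀ x, AddCommGroup (V x)]
  [module : ∀ x, Module k (V x)]
  map : ∀ {x y : P}, x ≤ y → (V x →ₗ[k] V y)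
  map_refl : ∀ x : P, map (le_refl x) = LinearMap.id
  map_trans : ∀ {x y z : P} (hxy : x ≤ y) (hyz : y ≤ z),
      map (le_trans hxy hyz) = (map hyz).comp (map hxy)

attribute [instance] PersistenceModule.addCommGroup PersistenceModule.module

variable {k}

/-- A morphism of persistence modules. -/
structure Hom {P : Type} [Preorder P] (M N : PersistenceModule k P) where
  app : ∀ x, M.V x →ₗ[k] N.V x
  natural : ∀ {x y : P} (h : x ≤ y), (N.map h).comp (app x) = (app y).comp (M.map h)

/-- A morphism of persistence modules is an isomorphism iff it is pointwise bijective. -/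
def IsIsoHom {P : Type} [Preorder P] {M N : PersistenceModule k P} (f : Hom M N) : Prop :=
  ∀ x, Function.Bijective (f.app x)

/-- Two persistence modules are isomorphic if there is a pointwise bijective
morphism between them. -/
def Isomorphic {P : Type} [Preorder P] (M N : PersistenceModule k P) : Prop :=
  ∃ f : Hom M N, IsIsoHom f

/-- The direct sum of a family of persistence modules, taken pointwise
(`Π₀` is the finitely supported product, i.e. the direct sum). -/
noncomputable def directSum {P : Type} [Preorder P] {ι : Type}
    (N : ι → PersistenceModule k P) : PersistenceModule k P where
  V x := Π₀ i, (N i).V x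
  map {x y} h := DFinsupp.mapRange.linearMap (fun i => (N i).map h)
  map_refl x := by
    have h : (fun i => (N i).map (le_refl x)) =
        fun i => (LinearMap.id : (N i).V x →ₗ[k] (N i).V x) :=
      funext fun i => (N i).map_refl x
    rw [h]
    exact DFinsupp.mapRange.linearMap_id
  map_trans {x y z} hxy hyz := by
    have h : (fun i => (N i).map (le_trans hxy hyz)) =
        fun i => ((N i).map hyz).comp ((N i).map hxy) :=
      funext fun i => (N i).map_trans hxy hyz
    rw [h]
    exact DFinsupp.mapRange.linearMap_comp _ _

/-- The binary direct sum of two persistence modules, taken pointwise. -/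
def sum2 {P : Type} [Preorder P] (M N : PersistenceModule k P) : PersistenceModule k P where
  V x := M.V x × N.V x
  map h := (M.map h).prodMap (N.map h)
  map_refl x := by
    rw [M.map_refl, N.map_refl]
    exact LinearMap.prodMap_id
  map_trans hxy hyz := by
    rw [M.map_trans hxy hyz, N.map_trans hxy hyz]
    exact (LinearMap.prodMap_comp _ _ _ _).symm

/-- The zero persistence module predicate. -/
def IsZero {P : Type} [Preorder P] (M : PersistenceModule k P) : Prop :=
  ∀ x, ∀ v : M.V x, v = 0

/-- A persistence module is indecomposable if it is nonzero and whenever it is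
isomorphic to a direct sum of two modules, one of the summands is zero. -/
def Indecomposable {P : Type} [Preorder P] (M : PersistenceModule k P) : Prop :=
  ¬ IsZero M ∧ ∀ M' M'' : PersistenceModule k P,
    Isomorphic M (sum2 M' M'') → IsZero M' ∨ IsZero M''

variable (k)

/-- A subset of a preordered set is convex. -/
def IsConvex {P : Type} [Preorder P] (I : Set P) : Prop :=
  ∀ p q r : P, p ≤ q → q ≤ r → p ∈ I → r ∈ I → q ∈ I

open Classical in
/-- The fibre of the interval module `k_I` at `x`: a copy of `k` if `x ∈ I`, else `0`. -/
noncomputable def kMod {P : Type} [Preorder P] (I : Set P) (x : P) : Submodule k k :=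
  if x ∈ I then ⊤ else ⊥

/-- The canonical generator of the fibre of the interval module at a point of `I`. -/
noncomputable def kGen {P : Type} [Preorder P] {I : Set P} {x : P} (hx : x ∈ I) :
    kMod k I x :=
  ⟨1, by simp [kMod, hx]⟩

open Classical in
/-- The structure maps of the interval module. -/
noncomputable def intervalMap {P : Type} [Preorder P] (I : Set P) {x y : P} (_ : x ≤ y) :
    kMod k I x →ₗ[k] kMod k I y where
  toFun m := if hy : y ∈ I then ⟨(m : k), by simp [kMod, hy]⟩ else 0
  map_add' a b := by
    by_cases hy : y ∈ I <;> simp [hy]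
  map_smul' c a := by
    by_cases hy : y ∈ I <;> simp [hy]

theorem kMod_coe_eq_zero {P : Type} [Preorder P] {I : Set P} {x : P} (hx : x ∉ I)
    (m : kMod k I x) : (m : k) = 0 := by
  have hm := m.2
  simp only [kMod, if_neg hx, Submodule.mem_bot] at hm
  exact hm

/-- The interval module `k_I` of a convex subset `I ⊆ P`: one-dimensional with
identity structure maps on `I`, and zero outside of `I`. -/
noncomputable def intervalModule {P : Type} [Preorder P] (I : Set P) (hI : IsConvex I) :
    PersistenceModule k P where
  V x := kMod k I x
  map h := intervalMap k I h
  map_refl x := by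
    ext m
    by_cases hx : x ∈ I
    · simp [intervalMap, hx]
    · simp [intervalMap, hx, kMod_coe_eq_zero k hx m]
  map_trans {x y z} hxy hyz := by
    ext m
    by_cases hz : z ∈ I
    · by_cases hy : y ∈ I
      · simp [intervalMap, hz, hy]
      · have hx : x ∉ I := fun hx => hy (hI x y z hxy hyz hx hz)
        simp [intervalMap, hz, hy, kMod_coe_eq_zero k hx m]
    · by_cases hy : y ∈ I <;> simp [intervalMap, hz, hy]

/-- The constant persistence module `k_P` with value `k` everywhere. -/
def constModule (P : Type) [Preorder P] : PersistenceModule k P where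
  V _ := k
  map _ := LinearMap.id
  map_refl _ := rfl
  map_trans _ _ := rfl

variable {k}

/-- Connectedness of a subset of a preordered set: any two points are joined by
a finite zigzag of comparable points inside the subset. -/
def IsConn {P : Type} [Preorder P] (I : Set P) : Prop :=
  ∀ p ∈ I, ∀ q ∈ I, ∃ (n : ℕ) (r : ℕ → P), r 0 = p ∧ r n = q ∧ (∀ i ≤ n, r i ∈ I) ∧
    ∀ i < n, r i ≤ r (i + 1) ∨ r (i + 1) ≤ r i

/-- An interval in a poset: a nonempty convex connected subset. -/
def IsInterval {P : Type} [Preorder P] (I : Set P) : Prop :=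
  I.Nonempty ∧ IsConvex I ∧ IsConn I

/-- An ideal: a subset closed under going down. -/
def IsIdeal {P : Type} [Preorder P] (I : Set P) : Prop :=
  ∀ p q : P, p ≤ q → q ∈ I → p ∈ I

/-- A filter: a subset closed under going up. -/
def IsFilter {P : Type} [Preorder P] (I : Set P) : Prop :=
  ∀ p q : P, p ≤ q → p ∈ I → q ∈ I

/-- An interval in a totally ordered set: a nonempty convex subset. -/
def IsIntervalLin {P : Type} [Preorder P] (I : Set P) : Prop :=
  I.Nonempty ∧ IsConvex I

theorem IsConvex.prod {S T : Type} [Preorder S] [Preorder T] {A : Set S} {B : Set T}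
    (hA : IsConvex A) (hB : IsConvex B) : IsConvex (A ×ˢ B) := by
  intro p q r hpq hqr hp hr
  exact ⟨hA _ _ _ hpq.1 hqr.1 hp.1 hr.1, hB _ _ _ hpq.2 hqr.2 hp.2 hr.2⟩

theorem isConvex_univ {P : Type} [Preorder P] : IsConvex (Set.univ : Set P) :=
  fun _ _ _ _ _ _ _ => trivial

/-- A block in the product of two totally ordered sets. -/
def IsBlock {S T : Type} [LinearOrder S] [LinearOrder T] (I : Set (S × T)) : Prop :=
  I.Nonempty ∧ (
    (∃ JS JT, IsIntervalLin JS ∧ IsIdeal JS ∧ IsIntervalLin JT ∧ IsIdeal JT ∧ I = JS ×ˢ JT) ∨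
    (∃ JS JT, IsIntervalLin JS ∧ IsFilter JS ∧ IsIntervalLin JT ∧ IsFilter JT ∧ I = JS ×ˢ JT) ∨
    (∃ JS, IsIntervalLin JS ∧ I = JS ×ˢ (Set.univ : Set T)) ∨
    (∃ JT, IsIntervalLin JT ∧ I = (Set.univ : Set S) ×ˢ JT))

theorem IsBlock.isConvex {S T : Type} [LinearOrder S] [LinearOrder T] {I : Set (S × T)}
    (h : IsBlock I) : IsConvex I := by
  obtain ⟨-, h | h | h | h⟩ := h
  · obtain ⟨JS, JT, hS, -, hT, -, rfl⟩ := h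
    exact hS.2.prod hT.2
  · obtain ⟨JS, JT, hS, -, hT, -, rfl⟩ := h
    exact hS.2.prod hT.2
  · obtain ⟨JS, hS, rfl⟩ := h
    exact hS.2.prod isConvex_univ
  · obtain ⟨JT, hT, rfl⟩ := h
    exact isConvex_univ.prod hT.2

/-- Convexity is inherited by preimages in a subposet. -/
theorem IsConvex.preimage {P : Type} [Preorder P] {J : Set P} (hJ : IsConvex J)
    (Q : Set P) : IsConvex {p : Q | (p : P) ∈ J} :=
  fun p q r hpq hqr hp hr => hJ p q r hpq hqr hp hr

/-- The restriction of a persistence module to a subposet. -/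
def restrict {P : Type} [Preorder P] (M : PersistenceModule k P) (Q : Set P) :
    PersistenceModule k Q where
  V q := M.V q
  map h := M.map h
  map_refl q := M.map_refl q
  map_trans hxy hyz := M.map_trans hxy hyz

/-- Middle exactness for persistence modules over a product of two totally ordered sets:
for every rectangle `a = (x,y) ≤ b = (x,y'), c = (x',y) ≤ d = (x',y')` the sequence
`M_a → M_b ⊕ M_c → M_d` is exact at `M_b ⊕ M_c`. -/
def MiddleExact {S T : Type} [Preorder S] [Preorder T]
    (M : PersistenceModule k (S × T)) : Prop :=
  ∀ (x x' : S) (y y' : T) (hx : x ≤ x') (hy : y ≤ y')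
    (mb : M.V (x, y')) (mc : M.V (x', y)),
    M.map (show (x, y') ≤ (x', y') from ⟨hx, le_refl y'⟩) mb =
      M.map (show (x', y) ≤ (x', y') from ⟨le_refl x', hy⟩) mc →
    ∃ ma : M.V (x, y),
      M.map (show (x, y) ≤ (x, y') from ⟨le_refl x, hy⟩) ma = mb ∧
      M.map (show (x, y) ≤ (x', y) from ⟨hx, le_refl y⟩) ma = mc


theorem IsIdeal.isConvex {P : Type} [Preorder P] {I : Set P} (h : IsIdeal I) : IsConvex I :=
  fun _ q r _ hqr _ hr => h q r hqr hr

theorem IsFilter.isConvex {P : Type} [Preorder P] {I : Set P} (h : IsFilter I) : IsConvex I :=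
  fun p q _ hpq _ hp _ => h p q hpq hp


/-- Convexity of the preimage of a convex subset of `T` in a subposet of `S × T`. -/
theorem IsConvex.preimageSnd {S T : Type} [Preorder S] [Preorder T] {J : Set T}
    (hJ : IsConvex J) (Q : Set (S × T)) : IsConvex {p : ↥Q | (p : S × T).2 ∈ J} :=
  fun p q r hpq hqr hp hr =>
    hJ _ _ _ (Subtype.coe_le_coe.mpr hpq).2 (Subtype.coe_le_coe.mpr hqr).2 hp hr

end PMod


namespace PMod

/-- Evaluation of a finitely supported family of functionals on a family of vectors. -/
noncomputable def pairing {k ι : Type} [Field k] [DecidableEq ι] {E : ι → Type}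
    [∀ i, AddCommGroup (E i)] [∀ i, Module k (E i)] (e : ∀ i, E i) :
    (Π₀ i, Module.Dual k (E i)) →ₗ[k] k :=
  DFinsupp.lsum ℕ (fun i => Module.Dual.eval k (E i) (e i))

theorem pairing_single {k ι : Type} [Field k] [DecidableEq ι] {E : ι → Type}
    [∀ i, AddCommGroup (E i)] [∀ i, Module k (E i)] (e : ∀ i, E i) (i : ι)
    (f : Module.Dual k (E i)) :
    pairing e (DFinsupp.single i f) = f (e i) := by
  simp [pairing]

theorem pairing_surj {k ι : Type} [Field k] [DecidableEq ι] {E : ι → Type}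
    [∀ i, AddCommGroup (E i)] [∀ i, Module k (E i)] [∀ i, FiniteDimensional k (E i)]
    (f : (Π₀ i, Module.Dual k (E i)) →ₗ[k] k) : ∃ e : ∀ i, E i, pairing e = f := by
  refine ⟨fun i => (Module.evalEquiv k (E i)).symm (f.comp
    (DFinsupp.lsingle (R := k) (M := fun i => Module.Dual k (E i)) i)), ?_⟩
  apply DFinsupp.lhom_ext
  intro i g
  rw [pairing_single]
  simp

theorem exists_factor {k V W : Type} [Field k] [AddCommGroup V] [Module k V] [AddCommMonoid W]
    [Module k W] (Φ : V →ₗ[k] W) (C : V →ₗ[k] k) (h : ∀ a, Φ a = 0 → C a = 0) :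
    ∃ f : W →ₗ[k] k, f.comp Φ = C := by
  letI : AddCommGroup W := Module.addCommMonoidToAddCommGroup k
  have hC : C ∈ LinearMap.range Φ.dualMap := by
    rw [LinearMap.range_dualMap_eq_dualAnnihilator_ker, Submodule.mem_dualAnnihilator]
    exact fun a ha => h a ha
  exact hC

/-- Linear compactness. -/
theorem compactness {k ι : Type} [Field k] [DecidableEq ι] {E : ι → Type}
    [∀ i, AddCommGroup (E i)] [∀ i, Module k (E i)] [∀ i, FiniteDimensional k (E i)]
    (Good : Finset ι → (∀ i, E i) → Prop)
    (mono : ∀ F G e, F ⊆ G → Good G e → Good F e) (ex : ∀ F, ∃ e, Good F e) :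
    ∃ e : ∀ i, E i, ∀ (l : Π₀ i, Module.Dual k (E i)) (c : k) (F : Finset ι),
      (∀ e', Good F e' → pairing e' l = c) → pairing e l = c := by
  let K : Set ((Π₀ i, Module.Dual k (E i)) × k) :=
    {p | ∃ F, ∀ e', Good F e' → pairing e' p.1 = p.2}
  let Φ : (K →₀ k) →ₗ[k] (Π₀ i, Module.Dual k (E i)) :=
    Finsupp.linearCombination k (fun p : K => p.1.1)
  let C : (K →₀ k) →ₗ[k] k := Finsupp.linearCombination k (fun p : K => p.1.2)
  have hC : ∃ f : (Π₀ i, Module.Dual k (E i)) →ₗ[k] k, f.comp Φ = C := by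
    refine exists_factor Φ C fun a ha => ?_
    choose F hF using fun p : K => p.2
    obtain ⟨e, he⟩ := ex (a.support.biUnion F)
    have h1 : C a = pairing e (Φ a) := by
      simp only [C, Φ, Finsupp.linearCombination_apply, Finsupp.sum, map_sum, map_smul]
      refine Finset.sum_congr rfl fun p hp => ?_
      rw [hF p e (mono _ _ _ (Finset.subset_biUnion_of_mem F hp) he)]
    rw [h1, ha, map_zero]
  obtain ⟨f, hf⟩ := hC
  obtain ⟨e, rfl⟩ := pairing_surj f
  refine ⟨e, fun l c F h => ?_⟩
  have := LinearMap.congr_fun hf (Finsupp.single ⟨(l, c), F, h⟩ 1)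
  simpa [Φ, C] using this

section
variable {k S : Type} [Field k] [LinearOrder S] (M : PersistenceModule k S)

theorem map_map {a b c : S} (h : a ≤ b) (h' : b ≤ c) (v : M.V a) :
    M.map h' (M.map h v) = M.map (h.trans h') v := by
  rw [M.map_trans h h']; rfl

open Classical in
/-- The submodule generated by everything up to `x`. -/
noncomputable def gen (x z : S) : Submodule k (M.V z) :=
  if h : x ≤ z then LinearMap.range (M.map h) else ⊤

theorem gen_map (x : S) {z w : S} (h : z ≤ w) (v : M.V z) (hv : v ∈ gen M x z) :
    M.map h v ∈ gen M x w := by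
  unfold gen at *
  by_cases hz : x ≤ z
  · rw [dif_pos hz] at hv
    rw [dif_pos (hz.trans h)]
    obtain ⟨u, rfl⟩ := hv
    exact ⟨u, (map_map M _ _ _).symm⟩
  · by_cases hw : x ≤ w
    · rw [dif_pos hw]
      exact ⟨M.map (not_le.mp hz).le v, map_map M _ _ _⟩
    · rw [dif_neg hw]; trivial

/-- The projections onto `gen`. -/
def IsProjOn (x z : S) (e : M.V z →ₗ[k] M.V z) : Prop :=
  (∀ v, e v ∈ gen M x z) ∧ ∀ v ∈ gen M x z, e v = v

theorem exists_proj (x z : S) : ∃ e, IsProjOn M x z e := by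
  obtain ⟨f, hf⟩ := LinearMap.exists_leftInverse_of_injective (gen M x z).subtype
    (Submodule.ker_subtype _)
  refine ⟨(gen M x z).subtype.comp f, fun v => (f v).2, fun v hv => ?_⟩
  have := LinearMap.congr_fun hf ⟨v, hv⟩
  simp only [LinearMap.comp_apply, Submodule.subtype_apply, LinearMap.id_apply] at this
  simp [this]

theorem exists_lift (x : S) {z w : S} (h : z ≤ w) (e : M.V w →ₗ[k] M.V w)
    (he : IsProjOn M x w e) :
    ∃ g, IsProjOn M x z g ∧ (M.map h).comp g = e.comp (M.map h) := by
  by_cases hz : x ≤ z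
  · obtain ⟨p, hp⟩ := exists_proj M x z
    have hgz : gen M x z = LinearMap.range (M.map hz) := by simp [gen, hz]
    have hgw : gen M x w = LinearMap.range (M.map (hz.trans h)) := by simp [gen, hz.trans h]
    obtain ⟨σ, hσ⟩ := LinearMap.exists_rightInverse_of_surjective
      (M.map (hz.trans h)).rangeRestrict (LinearMap.range_rangeRestrict _)
    let e' : M.V w →ₗ[k] LinearMap.range (M.map (hz.trans h)) :=
      e.codRestrict _ (fun v => hgw ▸ he.1 v)
    have hσe : ∀ v, M.map (hz.trans h) (σ (e' v)) = e v := fun v => by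
      have := congrArg Subtype.val (LinearMap.congr_fun hσ (e' v))
      simpa [e'] using this
    refine ⟨p + (M.map hz).comp (σ.comp (e'.comp ((M.map h).comp (LinearMap.id - p)))),
      ⟨fun v => ?_, fun v hv => ?_⟩, ?_⟩
    · refine Submodule.add_mem _ (hp.1 v) ?_
      rw [hgz]
      exact ⟨_, rfl⟩
    · simp [hp.2 v hv]
    · ext v
      have h1 : e (M.map h (p v)) = M.map h (p v) := he.2 _ (gen_map M x h _ (hp.1 v))
      have h2 := hσe (M.map h (v - p v))
      simp only [LinearMap.comp_apply, LinearMap.add_apply, map_add, LinearMap.sub_apply,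
        LinearMap.id_apply]
      rw [map_map, h2, map_sub, map_sub, h1]
      abel
  · have hg : gen M x z = ⊤ := by simp [gen, hz]
    refine ⟨LinearMap.id, ⟨fun v => by simp [hg], fun v _ => rfl⟩, ?_⟩
    ext v
    exact (he.2 _ (gen_map M x h v (by simp [hg]))).symm

/-- Families that are compatible on a finite set. -/
def Good (x : S) (F : Finset S) (e : ∀ z, M.V z →ₗ[k] M.V z) : Prop :=
  (∀ z ∈ F, IsProjOn M x z (e z)) ∧
  ∀ z ∈ F, ∀ w ∈ F, ∀ h : z ≤ w, (M.map h).comp (e z) = (e w).comp (M.map h)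

theorem exists_good (x : S) (F : Finset S) : ∃ e, Good M x F e := by
  induction F using Finset.induction_on_min with
  | empty => exact ⟨fun _ => 0, by simp [Good]⟩
  | insert a s ha ih =>
    obtain ⟨e, he1, he2⟩ := ih
    have key : ∃ g, IsProjOn M x a g ∧ ∀ w ∈ s, ∀ h : a ≤ w,
        (M.map h).comp g = (e w).comp (M.map h) := by
      rcases s.eq_empty_or_nonempty with rfl | hs
      · obtain ⟨g, hg⟩ := exists_proj M x a
        exact ⟨g, hg, by simp⟩
      · have hm := s.min'_mem hs
        obtain ⟨g, hg, hc⟩ := exists_lift M x (ha _ hm).le (e _) (he1 _ hm)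
        refine ⟨g, hg, fun w hw h => ?_⟩
        have hmw := s.min'_le w hw
        rw [M.map_trans (ha _ hm).le hmw, LinearMap.comp_assoc, hc, ← LinearMap.comp_assoc,
          he2 _ hm _ hw hmw, LinearMap.comp_assoc]
    obtain ⟨g, hg, hc⟩ := key
    have hne : ∀ w ∈ s, Function.update e a g w = e w := fun w hw =>
      Function.update_of_ne (ha w hw).ne' _ _
    refine ⟨Function.update e a g, fun z hz => ?_, fun z hz w hw h => ?_⟩
    · rcases Finset.mem_insert.mp hz with rfl | hz
      · simpa using hg
      · rw [hne z hz]; exact he1 z hz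
    · rcases Finset.mem_insert.mp hz with rfl | hz' <;>
        rcases Finset.mem_insert.mp hw with rfl | hw'
      · rw [M.map_refl]; rfl
      · rw [hne w hw', Function.update_self]; exact hc w hw' h
      · exact absurd h (not_le.mpr (ha z hz'))
      · rw [hne w hw', hne z hz']; exact he2 z hz' w hw' h

theorem exists_global (hfd : ∀ x, FiniteDimensional k (M.V x)) (x : S) :
    ∃ e : ∀ z, M.V z →ₗ[k] M.V z, (∀ z, IsProjOn M x z (e z)) ∧
      ∀ z w, ∀ h : z ≤ w, (M.map h).comp (e z) = (e w).comp (M.map h) := by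
  obtain ⟨e, he⟩ := compactness (k := k) (E := fun z => M.V z →ₗ[k] M.V z) (Good M x)
    (fun F G e hFG h => ⟨fun z hz => h.1 z (hFG hz),
      fun z hz w hw => h.2 z (hFG hz) w (hFG hw)⟩) (exists_good M x)
  refine ⟨e, fun z => ⟨fun v => ?_, fun v hv => ?_⟩, fun z w h => ?_⟩
  · by_contra hv
    obtain ⟨φ, hφ, hφ'⟩ := Submodule.exists_le_ker_of_notMem hv
    have := he (DFinsupp.single z (φ.comp (LinearMap.applyₗ v))) 0 {z} (fun e' h' => by
      rw [pairing_single]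
      exact hφ' ((h'.1 z (by simp)).1 v))
    rw [pairing_single] at this
    exact hφ this
  · rw [← sub_eq_zero, ← Module.forall_dual_apply_eq_zero_iff k]
    intro φ
    have := he (DFinsupp.single z (φ.comp (LinearMap.applyₗ v))) (φ v) {z} (fun e' h' => by
      rw [pairing_single]
      exact congrArg φ ((h'.1 z (by simp)).2 v hv))
    rw [pairing_single] at this
    rw [map_sub, sub_eq_zero]
    exact this
  · ext v
    rw [← sub_eq_zero, ← Module.forall_dual_apply_eq_zero_iff k]
    intro φ
    have := he (DFinsupp.single z ((φ.comp (M.map h)).comp (LinearMap.applyₗ v)) +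
      DFinsupp.single w (-φ.comp (LinearMap.applyₗ (M.map h v)))) 0 {z, w} (fun e' h' => by
      rw [map_add, pairing_single, pairing_single, LinearMap.neg_apply, ← sub_eq_add_neg,
        sub_eq_zero]
      exact congrArg φ (LinearMap.congr_fun (h'.2 z (by simp) w (by simp) h) v))
    rw [map_add, pairing_single, pairing_single, LinearMap.neg_apply, ← sub_eq_add_neg] at this
    rw [map_sub]
    exact this

/-- The persistence submodule given by a compatible family of subspaces. -/
def subMod (N : ∀ z, Submodule k (M.V z))
    (hN : ∀ {z w : S} (h : z ≤ w) (v : M.V z), v ∈ N z → M.map h v ∈ N w) :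
    PersistenceModule k S where
  V z := N z
  map h := (M.map h).restrict (hN h)
  map_refl z := by
    ext v
    simp [M.map_refl]
  map_trans h h' := by
    ext v
    simp [M.map_trans h h']

end

end PMod

open PMod in
/-- A pointwise finite-dimensional indecomposable persistence module over a totally
ordered set with full support has surjective structure maps. -/
theorem stmt10 {k : Type} [Field k] {S : Type} [LinearOrder S]
    (M : PersistenceModule k S) (hfd : ∀ x, FiniteDimensional k (M.V x))
    (hind : Indecomposable M) (hne : ∀ x, ∃ v : M.V x, v ≠ 0) :
    ∀ (x y : S) (h : x ≤ y), Function.Surjective (M.map h) := by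
  intro x y hxy
  obtain ⟨e, he, hc⟩ := exists_global M hfd x
  have hc' : ∀ {z w : S} (h : z ≤ w) (v : M.V z), M.map h (e z v) = e w (M.map h v) :=
    fun h v => LinearMap.congr_fun (hc _ _ h) v
  have hid : ∀ z v, e z (e z v) = e z v := fun z v => (he z).2 _ ((he z).1 v)
  have hK : ∀ {z w : S} (h : z ≤ w) (v : M.V z), v ∈ LinearMap.ker (e z) →
      M.map h v ∈ LinearMap.ker (e w) := fun h v hv => by
    rw [LinearMap.mem_ker] at *
    rw [← hc', hv, map_zero]
  have iso : Isomorphic M (sum2 (subMod M (gen M x) (gen_map M x))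
      (subMod M (fun z => LinearMap.ker (e z)) hK)) := by
    refine ⟨⟨fun z => LinearMap.prod ((e z).codRestrict (gen M x z) (he z).1)
      ((LinearMap.id - e z).codRestrict (LinearMap.ker (e z)) (fun v => by simp [hid])),
      fun {z w} h => ?_⟩, fun z => ⟨?_, ?_⟩⟩
    · refine LinearMap.ext fun v => Prod.ext (Subtype.ext ?_) (Subtype.ext ?_)
      · exact hc' h v
      · change M.map h (v - e z v) = M.map h v - e w (M.map h v)
        rw [map_sub, hc']
    · intro u v huv
      have h1 : e z u = e z v := congrArg Subtype.val (congrArg Prod.fst huv)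
      have h2 : u - e z u = v - e z v := congrArg Subtype.val (congrArg Prod.snd huv)
      rw [h1] at h2
      exact sub_left_injective h2
    · rintro ⟨⟨u, hu⟩, ⟨v, hv⟩⟩
      have h1 : e z (u + v) = u := by
        rw [map_add, (he z).2 u hu, LinearMap.mem_ker.mp hv, add_zero]
      refine ⟨u + v, Prod.ext (Subtype.ext h1) (Subtype.ext ?_)⟩
      change (u + v) - e z (u + v) = v
      rw [h1, add_sub_cancel_left]
  rcases hind.2 _ _ iso with h0 | h0
  · obtain ⟨v, hv⟩ := hne x
    have hvm : v ∈ gen M x x := by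
      simp only [gen, le_refl, dif_pos]
      exact ⟨v, by rw [M.map_refl]; rfl⟩
    exact absurd (congrArg Subtype.val (h0 x ⟨v, hvm⟩)) hv
  · intro v
    have h1 := congrArg Subtype.val (h0 y ⟨v - e y v, by
      rw [LinearMap.mem_ker, map_sub, hid, sub_self]⟩)
    have h2 : v = e y v := sub_eq_zero.mp h1
    have h3 := (he y).1 v
    rw [← h2] at h3
    rw [gen, dif_pos hxy] at h3
    exact h3
end

section
/- Let k be a field, S and T totally ordered sets, x ∈ S, y ∈ T, and let H ⊆ S × T be the hook subposet H = ({x} × {t ∈ T : t ≤ y}) ∪ ({s ∈ S : s ≤ x} × {y}). Then every pointwise finite-dimensional indecomposable persistence module M : H → Vec_k is isomorphic to k_I for some interval I ⊆ H. -/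
namespace PMod

section Helpers

theorem hk_map_map {k : Type} [Field k] {P : Type} [Preorder P] (M : PersistenceModule k P)
    {a b c : P} (hab : a ≤ b) (hbc : b ≤ c) (m : M.V a) :
    M.map hbc (M.map hab m) = M.map (le_trans hab hbc) m := by
  rw [M.map_trans hab hbc]; rfl

theorem hk_map_self {k : Type} [Field k] {P : Type} [Preorder P] (M : PersistenceModule k P)
    {a : P} (h : a ≤ a) (m : M.V a) : M.map h m = m := by
  rw [M.map_refl a]; rfl

/-- Splitting off an interval summand. -/
theorem hk_split {k : Type} [Field k] {P : Type} [Preorder P] (M : PersistenceModule k P)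
    (hind : Indecomposable M) (I : Set P) (p : P) (hp : p ∈ I)
    (hcomp : ∀ q ∈ I, q ≤ p ∨ p ≤ q)
    (v : ∀ q, M.V q) (φ : ∀ q, M.V q →ₗ[k] k)
    (h1 : ∀ q ∈ I, φ q (v q) = 1)
    (hv : ∀ s t (h : s ≤ t), s ∈ I → t ∈ I → M.map h (v s) = v t)
    (hv0 : ∀ s t (h : s ≤ t), s ∈ I → t ∉ I → M.map h (v s) = 0)
    (hφ : ∀ s t (h : s ≤ t), s ∈ I → t ∈ I → ∀ m, φ t (M.map h m) = φ s m)
    (hφ0 : ∀ s t (h : s ≤ t), s ∉ I → t ∈ I → ∀ m, φ t (M.map h m) = 0) :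
    ∃ hI : IsInterval I, Isomorphic M (intervalModule k I hI.2.1) := by
  classical
  have hconv : IsConvex I := by
    intro a b c hab hbc ha hc
    by_contra hb
    have e1 := hv0 a b hab ha hb
    have e2 := hv a c (le_trans hab hbc) ha hc
    rw [← hk_map_map M hab hbc, e1, map_zero] at e2
    have := h1 c hc
    rw [← e2, map_zero] at this
    exact zero_ne_one this
  have hconn : IsConn I := by
    intro a ha b hb
    refine ⟨2, fun i => if i = 0 then a else if i = 1 then p else b, by simp, by simp, ?_, ?_⟩
    · intro i _
      dsimp only
      split_ifs <;> assumption
    · intro i hi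
      have : i = 0 ∨ i = 1 := by omega
      rcases this with rfl | rfl
      · simpa using hcomp a ha
      · simpa using (hcomp b hb).symm
  refine ⟨⟨⟨p, hp⟩, hconv, hconn⟩, ?_⟩
  -- the complement
  let ψ : ∀ q, M.V q →ₗ[k] k := fun q => if q ∈ I then φ q else 0
  have ψin : ∀ q, q ∈ I → ψ q = φ q := fun q hq => if_pos hq
  have ψout : ∀ q, q ∉ I → ψ q = 0 := fun q hq => if_neg hq
  have hψmem : ∀ q m, ψ q m ∈ kMod k I q := by
    intro q m
    by_cases hq : q ∈ I
    · simp [kMod, hq]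
    · rw [ψout q hq]; exact Submodule.zero_mem _
  let w : ∀ q, M.V q := fun q => if q ∈ I then v q else 0
  have win : ∀ q, q ∈ I → w q = v q := fun q hq => if_pos hq
  have wout : ∀ q, q ∉ I → w q = 0 := fun q hq => if_neg hq
  have hker : ∀ {s t : P} (h : s ≤ t), ∀ m ∈ LinearMap.ker (ψ s),
      M.map h m ∈ LinearMap.ker (ψ t) := by
    intro s t h m hm
    rw [LinearMap.mem_ker] at hm ⊢
    by_cases ht : t ∈ I
    · rw [ψin t ht]
      by_cases hs : s ∈ I
      · rw [hφ s t h hs ht, ← ψin s hs, hm]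
      · exact hφ0 s t h hs ht m
    · rw [ψout t ht]; rfl
  let K : PersistenceModule k P :=
    { V := fun q => LinearMap.ker (ψ q)
      map := fun {s t} h => (M.map h).restrict (hker h)
      map_refl := by
        intro s
        ext m
        simp [LinearMap.restrict_apply, hk_map_self]
      map_trans := by
        intro a b c hab hbc
        ext m
        simp [LinearMap.restrict_apply, hk_map_map] }
  let pr : ∀ q, M.V q →ₗ[k] kMod k I q := fun q => (ψ q).codRestrict _ (hψmem q)
  have hprmem : ∀ q m, m - ψ q m • w q ∈ LinearMap.ker (ψ q) := by
    intro q m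
    rw [LinearMap.mem_ker]
    by_cases hq : q ∈ I
    · rw [ψin q hq, win q hq, map_sub, map_smul, h1 q hq]; simp
    · rw [ψout q hq]; rfl
  let kp : ∀ q, M.V q →ₗ[k] LinearMap.ker (ψ q) := fun q =>
    (LinearMap.id - (ψ q).smulRight (w q)).codRestrict _ (by
      intro m
      simpa using hprmem q m)
  have prnat : ∀ {s t : P} (h : s ≤ t) (m : M.V s),
      intervalMap k I h (pr s m) = pr t (M.map h m) := by
    intro s t h m
    apply Subtype.ext
    by_cases ht : t ∈ I
    · by_cases hs : s ∈ I
      · simp [intervalMap, ht, pr, ψin s hs, ψin t ht, hφ s t h hs ht]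
      · simp [intervalMap, ht, pr, ψout s hs, ψin t ht, hφ0 s t h hs ht]
    · simp [intervalMap, ht, pr, ψout t ht]
  let f0 : Hom M (intervalModule k I hconv) :=
    { app := pr
      natural := by
        intro s t h
        ext1 m
        exact prnat h m }
  have kpnat : ∀ {s t : P} (h : s ≤ t) (m : M.V s),
      M.map h (m - ψ s m • w s) = M.map h m - ψ t (M.map h m) • w t := by
    intro s t h m
    rw [map_sub, map_smul]
    congr 1
    by_cases hs : s ∈ I
    · rw [win s hs, ψin s hs]
      by_cases ht : t ∈ I
      · rw [hv s t h hs ht, ψin t ht, win t ht, hφ s t h hs ht]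
      · rw [hv0 s t h hs ht, wout t ht, smul_zero, smul_zero]
    · rw [wout s hs, map_zero, smul_zero]
      by_cases ht : t ∈ I
      · rw [ψin t ht, hφ0 s t h hs ht, zero_smul]
      · rw [wout t ht, smul_zero]
  let f : Hom M (sum2 (intervalModule k I hconv) K) :=
    { app := fun q => LinearMap.prod (pr q) (kp q)
      natural := by
        intro s t h
        ext1 m
        refine Prod.ext ?_ ?_
        · exact prnat h m
        · apply Subtype.ext
          exact kpnat h m }
  have wψ : ∀ q (c : k), c ∈ kMod k I q → ψ q (c • w q) = c := by
    intro q c hc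
    by_cases hq : q ∈ I
    · rw [map_smul, win q hq, ψin q hq, h1 q hq]; simp
    · have hc0 : c = 0 := kMod_coe_eq_zero k hq ⟨c, hc⟩
      rw [hc0]; simp
  have hf : IsIsoHom f := by
    intro q
    constructor
    · rw [injective_iff_map_eq_zero]
      intro m hm
      have e1 : ψ q m = 0 := congrArg (fun z => (Subtype.val (Prod.fst z) : k)) hm
      have e2 : m - ψ q m • w q = 0 := congrArg (fun z => (Subtype.val (Prod.snd z) : M.V q)) hm
      simpa [e1] using e2
    · rintro ⟨⟨c, hc⟩, ⟨m, hm⟩⟩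
      rw [LinearMap.mem_ker] at hm
      have e : ψ q (c • w q + m) = c := by rw [map_add, wψ q c hc, hm, add_zero]
      refine ⟨c • w q + m, Prod.ext (Subtype.ext ?_) (Subtype.ext ?_)⟩
      · exact e
      · change (c • w q + m) - ψ q (c • w q + m) • w q = m
        rw [e]; abel
  rcases hind.2 _ _ ⟨f, hf⟩ with h0 | h0
  · exfalso
    have := congrArg Subtype.val (h0 p (kGen k hp))
    exact one_ne_zero this
  · refine ⟨f0, ?_⟩
    intro q
    constructor
    · rw [injective_iff_map_eq_zero]
      intro m hm
      have e1 : ψ q m = 0 := congrArg (fun z => (Subtype.val z : k)) hm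
      have := h0 q ⟨m, e1⟩
      exact congrArg Subtype.val this
    · intro z
      obtain ⟨m, hm⟩ := (hf q).2 (z, 0)
      exact ⟨m, congrArg Prod.fst hm⟩

/-- Extending a functional along a directed system. -/
theorem hk_extend {k : Type} [Field k] {ι : Type} [Preorder ι] [IsDirectedOrder ι]
    (G : ι → Type) [∀ i, AddCommGroup (G i)] [∀ i, Module k (G i)]
    (f : ∀ i j, i ≤ j → G i →ₗ[k] G j) [DirectedSystem G (f · · ·)] (i0 : ι)
    (φ : G i0 →ₗ[k] k) (hφ : ∀ j (h : i0 ≤ j) m, f i0 j h m = 0 → φ m = 0) :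
    ∃ ψ : ∀ i, G i →ₗ[k] k, ψ i0 = φ ∧ ∀ i j (h : i ≤ j) m, ψ j (f i j h m) = ψ i m := by
  classical
  let o := Module.DirectLimit.of k ι G f i0
  have hmem : φ ∈ (LinearMap.ker o).dualAnnihilator := by
    rw [Submodule.mem_dualAnnihilator]
    intro m hm
    obtain ⟨j, h, e⟩ := Module.DirectLimit.of.zero_exact (LinearMap.mem_ker.1 hm)
    exact hφ j h m e
  rw [← LinearMap.range_dualMap_eq_dualAnnihilator_ker] at hmem
  obtain ⟨Ψ, hΨ⟩ := hmem
  refine ⟨fun i => Ψ.comp (Module.DirectLimit.of k ι G f i), hΨ, ?_⟩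
  intro i j h m
  simp only [LinearMap.comp_apply]
  rw [Module.DirectLimit.of_f]

/-- Two chains of subspaces. -/
theorem hk_linalg {k : Type} [Field k] {V : Type} [AddCommGroup V] [Module k V]
    [FiniteDimensional k V] (F G : Set (Submodule k V))
    (hG : ∀ a ∈ G, ∀ b ∈ G, a ≤ b ∨ b ≤ a)
    (hF : ∀ a ∈ F, ∀ b ∈ F, a ≤ b ∨ b ≤ a)
    (hF0 : ∃ a ∈ F, a ≠ ⊥) (hG0 : ⊤ ∈ G) :
    ∃ (v : V) (φ : V →ₗ[k] k), φ v = 1 ∧ (∀ a ∈ F, a = ⊥ ∨ v ∈ a) ∧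
      (∀ b ∈ G, v ∈ b ∨ b ≤ LinearMap.ker φ) := by
  obtain ⟨a0, ha0⟩ := exists_minimal_of_wellFoundedLT (fun a => a ∈ F ∧ a ≠ ⊥) hF0
  obtain ⟨b0, hb0⟩ := exists_minimal_of_wellFoundedLT (fun b => b ∈ G ∧ b ⊓ a0 ≠ ⊥)
    ⟨⊤, hG0, by simpa using ha0.prop.2⟩
  obtain ⟨c0, hc0⟩ := exists_maximal_of_wellFoundedGT
    (fun b => (b ∈ G ∨ b = ⊥) ∧ b ⊓ a0 = ⊥) ⟨⊥, Or.inr rfl, by simp⟩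
  obtain ⟨v, hv, hv0⟩ := (Submodule.ne_bot_iff _).1 hb0.prop.2
  have hvc : v ∉ c0 := by
    intro h
    have : v ∈ c0 ⊓ a0 := ⟨h, hv.2⟩
    rw [hc0.prop.2] at this
    exact hv0 (by simpa using this)
  obtain ⟨φ, hφv, hφ⟩ := Submodule.exists_le_ker_of_notMem hvc
  refine ⟨v, (φ v)⁻¹ • φ, by simp [hφv], ?_, ?_⟩
  · intro a ha
    by_cases h : a = ⊥
    · exact Or.inl h
    · right
      rcases hF a ha a0 ha0.prop.1 with h1 | h1
      · exact ha0.le_of_le ⟨ha, h⟩ h1 hv.2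
      · exact h1 hv.2
  · intro b hb
    by_cases h : b ⊓ a0 = ⊥
    · right
      have hbc : b ≤ c0 := by
        rcases hc0.prop.1 with hc | hc
        · rcases hG b hb c0 hc with h1 | h1
          · exact h1
          · exact hc0.le_of_ge ⟨Or.inl hb, h⟩ h1
        · exact hc0.le_of_ge ⟨Or.inl hb, h⟩ (hc ▸ bot_le)
      intro m hm
      have : φ m = 0 := hφ (hbc hm)
      simp [this]
    · left
      rcases hG b hb b0 hb0.prop.1 with h1 | h1
      · exact hb0.le_of_le ⟨hb, h⟩ h1 hv.1
      · exact h1 hv.1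

/-- Lifting a vector compatibly down a chain. -/
theorem hk_lower {k : Type} [Field k] {P : Type} [Preorder P] (M : PersistenceModule k P)
    (hfd : ∀ q, FiniteDimensional k (M.V q)) (p : P)
    (hlow : ∀ s t, s ≤ p → t ≤ p → s ≤ t ∨ t ≤ s) (v : M.V p) :
    ∃ w : ∀ q, M.V q, w p = v ∧ ∀ s t (h : s ≤ t) (ht : t ≤ p),
      v ∈ LinearMap.range (M.map (le_trans h ht)) → M.map h (w s) = w t := by
  classical
  let ι := {q : P // ∃ h : q ≤ p, v ∈ LinearMap.range (M.map h)}ᵒᵈ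
  let el : ι → P := fun i => (OrderDual.ofDual i).1
  let i0 : ι := OrderDual.toDual ⟨p, le_refl p, v, hk_map_self M _ v⟩
  have : IsDirectedOrder ι := ⟨by
    intro a b
    rcases hlow (el a) (el b) (OrderDual.ofDual a).2.1 (OrderDual.ofDual b).2.1 with h | h
    · exact ⟨a, le_refl _, h⟩
    · exact ⟨b, h, le_refl _⟩⟩
  let f : ∀ i j : ι, i ≤ j → Module.Dual k (M.V (el i)) →ₗ[k] Module.Dual k (M.V (el j)) :=
    fun i j h => (M.map (show el j ≤ el i from h)).dualMap
  have : DirectedSystem (fun i : ι => Module.Dual k (M.V (el i))) (f · · ·) :=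
    { map_self := by
        intro i x
        ext m
        exact congrArg x (hk_map_self M _ m)
      map_map := by
        intro a b c hij hjk x
        ext m
        exact congrArg x (hk_map_map M _ _ m) }
  obtain ⟨ψ, hψ0, hψ⟩ := hk_extend (fun i : ι => Module.Dual k (M.V (el i))) f i0
    (Module.Dual.eval k (M.V p) v) (by
      intro j h m hm
      obtain ⟨hj, u, hu⟩ := (OrderDual.ofDual j).2
      change m v = 0
      rw [← hu]
      exact congrArg (fun z => z u) hm)
  let w : ∀ q, M.V q := fun q =>
    if h : ∃ h : q ≤ p, v ∈ LinearMap.range (M.map h) then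
      (Module.evalEquiv k (M.V q)).symm (ψ (OrderDual.toDual ⟨q, h⟩)) else 0
  have hw : ∀ q (h : ∃ h : q ≤ p, v ∈ LinearMap.range (M.map h)),
      Module.evalEquiv k (M.V q) (w q) = ψ (OrderDual.toDual ⟨q, h⟩) := by
    intro q h
    simp only [w, dif_pos h]
    exact (Module.evalEquiv k (M.V q)).apply_symm_apply _
  refine ⟨w, ?_, ?_⟩
  · apply (Module.evalEquiv k (M.V p)).injective
    rw [hw p ⟨le_refl p, v, hk_map_self M _ v⟩]
    exact hψ0
  · intro s t h ht hs
    have ht' : v ∈ LinearMap.range (M.map ht) := by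
      obtain ⟨u, hu⟩ := hs
      exact ⟨M.map h u, by rw [hk_map_map, hu]⟩
    apply (Module.evalEquiv k (M.V t)).injective
    rw [hw t ⟨ht, ht'⟩]
    ext x
    have e := hψ (OrderDual.toDual ⟨t, ht, ht'⟩) (OrderDual.toDual ⟨s, le_trans h ht, hs⟩) h x
    refine Eq.trans ?_ e
    exact congrArg (fun z : Module.Dual k (Module.Dual k (M.V s)) => z (x.comp (M.map h)))
      (hw s ⟨le_trans h ht, hs⟩)

/-- Extending a functional compatibly up a chain. -/
theorem hk_upper {k : Type} [Field k] {P : Type} [Preorder P] (M : PersistenceModule k P)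
    (hup : ∀ s t u : P, s ≤ t → s ≤ u → t ≤ u ∨ u ≤ t) (p : P) (φ : M.V p →ₗ[k] k) :
    ∃ ψ : ∀ q, M.V q →ₗ[k] k, ψ p = φ ∧ ∀ s t (hs : p ≤ s) (h : s ≤ t),
      LinearMap.ker (M.map (le_trans hs h)) = ⊥ → ∀ m, ψ t (M.map h m) = ψ s m := by
  classical
  let ι := {q : P // ∃ h : p ≤ q, LinearMap.ker (M.map h) = ⊥}
  have hp0 : LinearMap.ker (M.map (le_refl p)) = ⊥ := by
    rw [M.map_refl]; exact LinearMap.ker_id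
  let i0 : ι := ⟨p, le_refl p, hp0⟩
  have : IsDirectedOrder ι := ⟨by
    intro a b
    rcases hup p a.1 b.1 a.2.1 b.2.1 with h | h
    · exact ⟨b, h, le_refl _⟩
    · exact ⟨a, le_refl _, h⟩⟩
  let f : ∀ i j : ι, i ≤ j → M.V i.1 →ₗ[k] M.V j.1 := fun i j h => M.map h
  have : DirectedSystem (fun i : ι => M.V i.1) (f · · ·) :=
    { map_self := by
        intro i x
        exact hk_map_self M _ x
      map_map := by
        intro a b c hij hjk x
        exact hk_map_map M _ _ x }
  obtain ⟨ψ, hψ0, hψ⟩ := hk_extend (fun i : ι => M.V i.1) f i0 φ (by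
      intro j h m hm
      obtain ⟨hj, hk⟩ := j.2
      have : m ∈ LinearMap.ker (M.map hj) := hm
      rw [hk, Submodule.mem_bot] at this
      rw [this, map_zero])
  refine ⟨fun q => if h : ∃ h : p ≤ q, LinearMap.ker (M.map h) = ⊥ then ψ ⟨q, h⟩ else 0, ?_, ?_⟩
  · have h : ∃ h : p ≤ p, LinearMap.ker (M.map h) = ⊥ := ⟨le_refl p, hp0⟩
    simp only [dif_pos h]
    exact hψ0
  · intro s t hs h hk m
    have hs' : LinearMap.ker (M.map hs) = ⊥ := by
      rw [eq_bot_iff, ← hk]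
      intro u hu
      rw [LinearMap.mem_ker] at hu ⊢
      rw [← hk_map_map M hs h, hu, map_zero]
    simp only [dif_pos (⟨hs, hs'⟩ : ∃ h : p ≤ s, LinearMap.ker (M.map h) = ⊥),
      dif_pos (⟨le_trans hs h, hk⟩ : ∃ h : p ≤ t, LinearMap.ker (M.map h) = ⊥)]
    exact hψ ⟨s, hs, hs'⟩ ⟨t, le_trans hs h, hk⟩ h m

theorem hk_range_mono {k : Type} [Field k] {P : Type} [Preorder P] (M : PersistenceModule k P)
    {s t p : P} (h : s ≤ t) (ht : t ≤ p) (hs : s ≤ p) :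
    LinearMap.range (M.map hs) ≤ LinearMap.range (M.map ht) := by
  rintro _ ⟨u, rfl⟩
  exact ⟨M.map h u, hk_map_map M _ _ u⟩

theorem hk_ker_mono {k : Type} [Field k] {P : Type} [Preorder P] (M : PersistenceModule k P)
    {s t p : P} (h : s ≤ t) (hs : p ≤ s) (ht : p ≤ t) :
    LinearMap.ker (M.map hs) ≤ LinearMap.ker (M.map ht) := by
  intro u hu
  rw [LinearMap.mem_ker] at hu ⊢
  rw [← hk_map_map M hs h, hu, map_zero]

theorem hk_range_self {k : Type} [Field k] {P : Type} [Preorder P] (M : PersistenceModule k P)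
    (p : P) : LinearMap.range (M.map (le_refl p)) = ⊤ := by
  rw [M.map_refl]; exact LinearMap.range_id

/-- Case 1: some map to the top is not injective. -/
theorem hk_case1 {k : Type} [Field k] {P : Type} [PartialOrder P] (M : PersistenceModule k P)
    (hfd : ∀ q, FiniteDimensional k (M.V q)) (hind : Indecomposable M)
    (hup : ∀ s t u : P, s ≤ t → s ≤ u → t ≤ u ∨ u ≤ t)
    (c : P) (hc : ∀ q, q ≤ c) (p : P)
    (hlow : ∀ s t, s ≤ p → t ≤ p → s ≤ t ∨ t ≤ s)
    (hinc : ∀ s t, s ≤ t → p ≤ t → t = c ∨ s ≤ p ∨ p ≤ s)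
    (hker : LinearMap.ker (M.map (hc p)) ≠ ⊥) :
    ∃ (I : Set P) (hI : IsInterval I), Isomorphic M (intervalModule k I hI.2.1) := by
  classical
  have := hfd p
  obtain ⟨v, φ, hφv, hF, hG⟩ := hk_linalg
    {a : Submodule k (M.V p) | ∃ (r : P) (h : p ≤ r), a = LinearMap.ker (M.map h)}
    {b : Submodule k (M.V p) | ∃ (q : P) (h : q ≤ p), b = LinearMap.range (M.map h)}
    (by
      rintro _ ⟨q, hq, rfl⟩ _ ⟨q', hq', rfl⟩
      rcases hlow q q' hq hq' with h | h
      · exact Or.inl (hk_range_mono M h _ _)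
      · exact Or.inr (hk_range_mono M h _ _))
    (by
      rintro _ ⟨q, hq, rfl⟩ _ ⟨q', hq', rfl⟩
      rcases hup p q q' hq hq' with h | h
      · exact Or.inl (hk_ker_mono M h _ _)
      · exact Or.inr (hk_ker_mono M h _ _))
    ⟨_, ⟨c, hc p, rfl⟩, hker⟩
    ⟨p, le_refl p, (hk_range_self M p).symm⟩
  obtain ⟨w, hwp, hw⟩ := hk_lower M hfd p hlow v
  obtain ⟨ψ, hψp, hψ⟩ := hk_upper M hup p φ
  -- total families
  let v' : ∀ q, M.V q := fun q => if h : p ≤ q then M.map h v else w q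
  let φ' : ∀ q, M.V q →ₗ[k] k := fun q => if h : q ≤ p then φ.comp (M.map h) else ψ q
  have v'up : ∀ q (h : p ≤ q), v' q = M.map h v := fun q h => dif_pos h
  have v'lo : ∀ q, q ≤ p → v' q = w q := by
    intro q h
    by_cases h' : p ≤ q
    · obtain rfl := le_antisymm h h'
      rw [v'up q h', hwp, hk_map_self]
    · exact dif_neg h'
  have φ'lo : ∀ q (h : q ≤ p) m, φ' q m = φ (M.map h m) := by
    intro q h m
    simp only [φ', dif_pos h, LinearMap.comp_apply]
  have φ'up : ∀ q, p ≤ q → φ' q = ψ q := by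
    intro q h
    by_cases h' : q ≤ p
    · obtain rfl := le_antisymm h h'
      ext m
      rw [φ'lo p h' m, hψp, hk_map_self]
    · exact dif_neg h'
  let I : Set P := {q | (∃ h : q ≤ p, v ∈ LinearMap.range (M.map h)) ∨
    (∃ h : p ≤ q, LinearMap.ker (M.map h) = ⊥)}
  have hp0 : LinearMap.ker (M.map (le_refl p)) = ⊥ := by
    rw [M.map_refl]; exact LinearMap.ker_id
  have hIlo : ∀ q (h : q ≤ p), q ∈ I → v ∈ LinearMap.range (M.map h) := by
    rintro q h (⟨_, h1⟩ | ⟨h2, _⟩)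
    · exact h1
    · obtain rfl := le_antisymm h h2
      exact ⟨v, hk_map_self M _ v⟩
  have hIup : ∀ q (h : p ≤ q), q ∈ I → LinearMap.ker (M.map h) = ⊥ := by
    rintro q h (⟨h2, _⟩ | ⟨_, h1⟩)
    · obtain rfl := le_antisymm h h2
      exact hp0
    · exact h1
  have hIc : ∀ q ∈ I, q ≤ p ∨ p ≤ q := by
    rintro q (⟨h, _⟩ | ⟨h, _⟩)
    · exact Or.inl h
    · exact Or.inr h
  have hcI : c ∉ I := fun h => hker (hIup c (hc p) h)
  have upcomp : ∀ s t, s ≤ t → s ∈ I → t ≤ p ∨ p ≤ t := by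
    intro s t h hs
    rcases hIc s hs with h1 | h1
    · exact hup s t p h h1
    · exact Or.inr (le_trans h1 h)
  have locomp : ∀ s t, s ≤ t → t ∈ I → s ≤ p ∨ p ≤ s := by
    intro s t h ht
    rcases hIc t ht with h1 | h1
    · exact Or.inl (le_trans h h1)
    · rcases hinc s t h h1 with h2 | h2
      · exact absurd (h2 ▸ ht) hcI
      · exact h2
  have hwv : ∀ q (h : q ≤ p), q ∈ I → M.map h (w q) = v := by
    intro q h hq
    rw [← hwp]
    exact hw q p h (le_refl p) (hIlo q h hq)
  have hψφ : ∀ q (h : p ≤ q), q ∈ I → ∀ m, ψ q (M.map h m) = φ m := by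
    intro q h hq m
    rw [← hψp]
    exact hψ p q (le_refl p) h (hIup q h hq) m
  refine ⟨I, hk_split M hind I p (Or.inr ⟨le_refl p, hp0⟩) hIc v' φ' ?_ ?_ ?_ ?_ ?_⟩
  · intro q hq
    rcases hIc q hq with h | h
    · rw [φ'lo q h, v'lo q h, hwv q h hq, hφv]
    · rw [φ'up q h, v'up q h, hψφ q h hq, hφv]
  · intro s t h hs ht
    rcases hIc s hs with h1 | h1
    · rcases hIc t ht with h2 | h2
      · rw [v'lo s h1, v'lo t h2]
        exact hw s t h h2 (hIlo s h1 hs)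
      · rw [v'lo s h1, v'up t h2, ← hk_map_map M h1 h2, hwv s h1 hs]
    · rw [v'up s h1, v'up t (le_trans h1 h), hk_map_map]
  · intro s t h hs ht
    rcases upcomp s t h hs with h2 | h2
    · exfalso
      have h1 := le_trans h h2
      exact ht (Or.inl ⟨h2, hk_range_mono M h _ h1 (hIlo s h1 hs)⟩)
    · have hvt : M.map h2 v = 0 := by
        rcases hF _ ⟨t, h2, rfl⟩ with h3 | h3
        · exact absurd (Or.inr ⟨h2, h3⟩) ht
        · exact h3
      rcases hIc s hs with h1 | h1
      · rw [v'lo s h1, ← hk_map_map M h1 h2, hwv s h1 hs, hvt]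
      · rw [v'up s h1, hk_map_map, hvt]
  · intro s t h hs ht m
    rcases hIc t ht with h1 | h1
    · rw [φ'lo t h1, φ'lo s (le_trans h h1), hk_map_map]
    · rcases hIc s hs with h2 | h2
      · rw [φ'up t h1, φ'lo s h2, ← hk_map_map M h2 h1, hψφ t h1 ht]
      · rw [φ'up t h1, φ'up s h2]
        exact hψ s t h2 h (hIup t h1 ht) m
  · intro s t h hs ht m
    rcases locomp s t h ht with h2 | h2
    · have hvs : φ (M.map h2 m) = 0 := by
        rcases hG _ ⟨s, h2, rfl⟩ with h3 | h3
        · exact absurd (Or.inl ⟨h2, h3⟩) hs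
        · exact h3 ⟨m, rfl⟩
      rcases hIc t ht with h1 | h1
      · rw [φ'lo t h1, hk_map_map, hvs]
      · rw [φ'up t h1, ← hk_map_map M h2 h1, hψφ t h1 ht, hvs]
    · exfalso
      have h1 := le_trans h2 h
      refine hs (Or.inr ⟨h2, ?_⟩)
      rw [eq_bot_iff, ← hIup t h1 ht]
      exact hk_ker_mono M h _ _

/-- Case 2: all maps to the top are injective. -/
theorem hk_case2 {k : Type} [Field k] {P : Type} [PartialOrder P] (M : PersistenceModule k P)
    (hfd : ∀ q, FiniteDimensional k (M.V q)) (hind : Indecomposable M)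
    (c : P) (hc : ∀ q, q ≤ c) (A B : Set P) (hAB : ∀ q, q ∈ A ∨ q ∈ B)
    (hcA : c ∈ A) (hcB : c ∈ B)
    (hA : ∀ s ∈ A, ∀ t ∈ A, s ≤ t ∨ t ≤ s) (hB : ∀ s ∈ B, ∀ t ∈ B, s ≤ t ∨ t ≤ s)
    (hker : ∀ p, LinearMap.ker (M.map (hc p)) = ⊥) :
    ∃ (I : Set P) (hI : IsInterval I), Isomorphic M (intervalModule k I hI.2.1) := by
  classical
  have := hfd c
  have hinj : ∀ p, Function.Injective (M.map (hc p)) := fun p => LinearMap.ker_eq_bot.1 (hker p)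
  have hne : (⊤ : Submodule k (M.V c)) ≠ ⊥ := by
    intro h
    apply hind.1
    intro q m
    apply hinj q
    have : M.map (hc q) m ∈ (⊤ : Submodule k (M.V c)) := trivial
    rw [h, Submodule.mem_bot] at this
    rw [this, map_zero]
  obtain ⟨v, φ, hφv, hF, hG⟩ := hk_linalg
    {a : Submodule k (M.V c) | ∃ r ∈ A, a = LinearMap.range (M.map (hc r))}
    {b : Submodule k (M.V c) | ∃ r ∈ B, b = LinearMap.range (M.map (hc r))}
    (by
      rintro _ ⟨q, hq, rfl⟩ _ ⟨q', hq', rfl⟩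
      rcases hB q hq q' hq' with h | h
      · exact Or.inl (hk_range_mono M h _ _)
      · exact Or.inr (hk_range_mono M h _ _))
    (by
      rintro _ ⟨q, hq, rfl⟩ _ ⟨q', hq', rfl⟩
      rcases hA q hq q' hq' with h | h
      · exact Or.inl (hk_range_mono M h _ _)
      · exact Or.inr (hk_range_mono M h _ _))
    ⟨⊤, ⟨c, hcA, (hk_range_self M c).symm⟩, hne⟩
    ⟨c, hcB, (hk_range_self M c).symm⟩
  have hdich : ∀ q, v ∈ LinearMap.range (M.map (hc q)) ∨ ∀ m, φ (M.map (hc q) m) = 0 := by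
    intro q
    rcases hAB q with h | h
    · rcases hF _ ⟨q, h, rfl⟩ with h1 | h1
      · right
        intro m
        have : M.map (hc q) m ∈ LinearMap.range (M.map (hc q)) := ⟨m, rfl⟩
        rw [h1, Submodule.mem_bot] at this
        rw [this, map_zero]
      · exact Or.inl h1
    · rcases hG _ ⟨q, h, rfl⟩ with h1 | h1
      · exact Or.inl h1
      · exact Or.inr fun m => h1 ⟨m, rfl⟩
  let I : Set P := {q | v ∈ LinearMap.range (M.map (hc q))}
  have hw : ∀ q, ∃ w : M.V q, q ∈ I → M.map (hc q) w = v := by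
    intro q
    by_cases h : q ∈ I
    · obtain ⟨w, hw⟩ := h
      exact ⟨w, fun _ => hw⟩
    · exact ⟨0, fun h' => absurd h' h⟩
  choose w hw using hw
  refine ⟨I, hk_split M hind I c ⟨v, hk_map_self M _ v⟩ (fun q _ => Or.inl (hc q)) w
    (fun q => φ.comp (M.map (hc q))) ?_ ?_ ?_ ?_ ?_⟩
  · intro q hq
    rw [LinearMap.comp_apply, hw q hq, hφv]
  · intro s t h hs ht
    apply hinj t
    rw [hk_map_map, hw s hs, hw t ht]
  · intro s t h hs ht
    exact absurd (hk_range_mono M h _ _ hs) ht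
  · intro s t h _ _ m
    rw [LinearMap.comp_apply, LinearMap.comp_apply, hk_map_map]
  · intro s t h hs _ m
    rw [LinearMap.comp_apply, hk_map_map]
    exact (hdich s).resolve_left hs m

/-- The abstract hook. -/
theorem hk_main {k : Type} [Field k] {P : Type} [PartialOrder P] (M : PersistenceModule k P)
    (hfd : ∀ q, FiniteDimensional k (M.V q)) (hind : Indecomposable M)
    (c : P) (hc : ∀ q, q ≤ c) (A B : Set P) (hAB : ∀ q, q ∈ A ∨ q ∈ B)
    (hcA : c ∈ A) (hcB : c ∈ B)
    (hA : ∀ s ∈ A, ∀ t ∈ A, s ≤ t ∨ t ≤ s) (hB : ∀ s ∈ B, ∀ t ∈ B, s ≤ t ∨ t ≤ s)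
    (hAup : ∀ s t, s ≤ t → s ∈ A → t ∈ A) (hBup : ∀ s t, s ≤ t → s ∈ B → t ∈ B)
    (hc' : ∀ q, q ∈ A → q ∈ B → q = c) :
    ∃ (I : Set P) (hI : IsInterval I), Isomorphic M (intervalModule k I hI.2.1) := by
  by_cases hker : ∀ p, LinearMap.ker (M.map (hc p)) = ⊥
  · exact hk_case2 M hfd hind c hc A B hAB hcA hcB hA hB hker
  push Not at hker
  obtain ⟨p, hp⟩ := hker
  have hpc : p ≠ c := by
    rintro rfl
    apply hp
    rw [LinearMap.ker_eq_bot]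
    intro a b hab
    rwa [hk_map_self, hk_map_self] at hab
  have hup : ∀ s t u : P, s ≤ t → s ≤ u → t ≤ u ∨ u ≤ t := by
    intro s t u h1 h2
    rcases hAB s with h | h
    · exact hA _ (hAup _ _ h1 h) _ (hAup _ _ h2 h)
    · exact hB _ (hBup _ _ h1 h) _ (hBup _ _ h2 h)
  have loA : ∀ s t, s ≤ t → t ∈ A → t ≠ c → s ∈ A := by
    intro s t h ht htc
    rcases hAB s with h1 | h1
    · exact h1
    · exact absurd (hc' t ht (hBup _ _ h h1)) htc
  have loB : ∀ s t, s ≤ t → t ∈ B → t ≠ c → s ∈ B := by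
    intro s t h ht htc
    rcases hAB s with h1 | h1
    · exact absurd (hc' t (hAup _ _ h h1) ht) htc
    · exact h1
  refine hk_case1 M hfd hind hup c hc p ?_ ?_ hp
  · intro s t hs ht
    rcases hAB p with h | h
    · exact hA _ (loA _ _ hs h hpc) _ (loA _ _ ht h hpc)
    · exact hB _ (loB _ _ hs h hpc) _ (loB _ _ ht h hpc)
  · intro s t h1 h2
    by_cases htc : t = c
    · exact Or.inl htc
    · right
      rcases hAB p with h | h
      · exact hA _ (loA _ _ h1 (hAup _ _ h2 h) htc) _ h
      · exact hB _ (loB _ _ h1 (hBup _ _ h2 h) htc) _ h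

end Helpers

end PMod

open PMod in
/-- Lemma 4.1: indecomposable pointwise finite-dimensional modules over a hook-shaped
subposet of a product of two totally ordered sets are interval modules. -/
theorem stmt11 {k : Type} [Field k] {S T : Type} [LinearOrder S] [LinearOrder T]
    (x : S) (y : T)
    (M : PersistenceModule k ↥(({x} : Set S) ×ˢ Set.Iic y ∪ Set.Iic x ×ˢ ({y} : Set T)))
    (hfd : ∀ p, FiniteDimensional k (M.V p)) (hind : Indecomposable M) :
    ∃ (I : Set ↥(({x} : Set S) ×ˢ Set.Iic y ∪ Set.Iic x ×ˢ ({y} : Set T)))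
      (hI : IsInterval I),
      Isomorphic M (intervalModule k I hI.2.1) := by
  refine hk_main M hfd hind ⟨(x, y), Or.inl ⟨rfl, le_refl y⟩⟩ ?_ {q | q.1.1 = x} {q | q.1.2 = y}
    ?_ rfl rfl ?_ ?_ ?_ ?_ ?_
  · rintro ⟨⟨a, b⟩, ⟨h1, h2⟩ | ⟨h1, h2⟩⟩
    · exact ⟨le_of_eq h1, h2⟩
    · exact ⟨h1, le_of_eq h2⟩
  · rintro ⟨⟨a, b⟩, ⟨h1, h2⟩ | ⟨h1, h2⟩⟩
    · exact Or.inl h1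
    · exact Or.inr h2
  · rintro ⟨⟨a, b⟩, hab⟩ h ⟨⟨a', b'⟩, hab'⟩ h'
    have e : a = a' := Eq.trans h (Eq.symm h')
    rcases le_total b b' with hb | hb
    · exact Or.inl ⟨le_of_eq e, hb⟩
    · exact Or.inr ⟨le_of_eq e.symm, hb⟩
  · rintro ⟨⟨a, b⟩, hab⟩ h ⟨⟨a', b'⟩, hab'⟩ h'
    have e : b = b' := Eq.trans h (Eq.symm h')
    rcases le_total a a' with hb | hb
    · exact Or.inl ⟨hb, le_of_eq e⟩
    · exact Or.inr ⟨hb, le_of_eq e.symm⟩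
  · rintro ⟨⟨a, b⟩, hab⟩ ⟨⟨a', b'⟩, h1 | h1⟩ h h'
    · exact h1.1
    · have e : a = x := h'
      have l : a ≤ a' := h.1
      exact le_antisymm h1.1 (e ▸ l)
  · rintro ⟨⟨a, b⟩, hab⟩ ⟨⟨a', b'⟩, h1 | h1⟩ h h'
    · have e : b = y := h'
      have l : b ≤ b' := h.2
      exact le_antisymm h1.2 (e ▸ l)
    · exact h1.2
  · rintro ⟨⟨a, b⟩, hab⟩ h h'
    exact Subtype.ext (Prod.ext h h')
end

section
/- Let k be a field, S and T totally ordered sets, and M a pointwise finite-dimensional, middle exact persistence module over S × T. Fix s ∈ S and an interval J_T ⊆ T that has an upper bound in T \ J_T. Then every monomorphism h from k_{{s} × J_T} to the restriction of M to the vertical line {s} × T extends to a monomorphism from k_{(-∞, s] × J_T} to the restriction of M to (-∞, s] × T, where (-∞, s] = {s' ∈ S : s' ≤ s}, agreeing with h on {s} × J_T. -/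
namespace PMod

open Filter in
/-- A generalized limit of linear functionals along a filter. -/
theorem exists_limit_functional {k : Type} [Field k] {D E : Type} [AddCommGroup E] [Module k E]
    (l : Filter D) [l.NeBot] (F : D → (E →ₗ[k] k)) :
    ∃ Ψ : E →ₗ[k] k, ∀ r c, (∀ᶠ d in l, F d r = c) → Ψ r = c := by
  let G : Submodule k (E × k) :=
    { carrier := {r | ∀ᶠ d in l, F d r.1 = r.2}
      add_mem' := by
        intro a b ha hb
        filter_upwards [ha, hb] with d h1 h2
        simp [h1, h2]
      zero_mem' := by simp
      smul_mem' := by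
        intro c a ha
        filter_upwards [ha] with d h1
        simp [h1] }
  have hG : ∀ r ∈ G, r.1 = 0 → r.2 = 0 := by
    rintro ⟨r, c⟩ hr h0
    obtain ⟨d, hd⟩ := Eventually.exists (f := l) hr
    simp only at h0 hd
    rw [h0, map_zero] at hd
    exact hd.symm
  obtain ⟨Ψ, hΨ⟩ := LinearMap.exists_extend (G.toLinearPMap).toFun
  refine ⟨Ψ, ?_⟩
  intro r c hrc
  have hm : (r, c) ∈ G.toLinearPMap.graph := by
    rw [Submodule.toLinearPMap_graph_eq G hG]
    exact hrc
  rw [LinearPMap.mem_graph_iff] at hm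
  obtain ⟨z, hz1, hz2⟩ := hm
  simp only at hz1 hz2
  rw [← hz1, ← hz2]
  exact LinearMap.congr_fun hΨ z

open Filter in
/-- A generalized limit: linear conditions in finitely many coordinates that hold eventually
along a filter can be solved simultaneously, when all coordinate spaces are finite-dimensional. -/
theorem exists_generalized_limit {k : Type} [Field k] {P D : Type} (V : P → Type)
    [∀ p, AddCommGroup (V p)] [∀ p, Module k (V p)] [∀ p, FiniteDimensional k (V p)]
    (l : Filter D) [l.NeBot] (y : D → ∀ p, V p) :
    ∃ x : ∀ p, V p, ∀ (p q : P) (U : Type) [AddCommGroup U] [Module k U]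
      (A : V p →ₗ[k] U) (B : V q →ₗ[k] U) (u : U),
      (∀ᶠ d in l, A (y d p) + B (y d q) = u) → A (x p) + B (x q) = u := by
  classical
  let Φ : (∀ p, V p) → ((Π₀ p, Module.Dual k (V p)) →ₗ[k] k) := fun z =>
    DFinsupp.lsum k (fun p => Module.Dual.eval k (V p) (z p))
  have hΦ : ∀ z p (φ : Module.Dual k (V p)), Φ z (DFinsupp.single p φ) = φ (z p) := by
    intro z p φ
    exact DFinsupp.lsum_single _ _ _ _
  obtain ⟨Ψ, hΨG⟩ := exists_limit_functional (k := k)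
    (E := Π₀ p, Module.Dual k (V p)) l (fun d => Φ (y d))
  choose x hx using fun p => (Module.evalEquiv k (V p)).surjective
    (Ψ ∘ₗ (DFinsupp.lsingle (R := k) (M := fun p => Module.Dual k (V p)) p))
  have hxp : ∀ p (φ : Module.Dual k (V p)), Ψ (DFinsupp.single p φ) = φ (x p) := by
    intro p φ
    have := LinearMap.congr_fun (hx p) φ
    simpa using this.symm
  refine ⟨x, ?_⟩
  intro p q U _ _ A B u hu
  rw [← sub_eq_zero, ← Module.forall_dual_apply_eq_zero_iff k]
  intro φ
  have key : ∀ᶠ d in l, Φ (y d)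
      (DFinsupp.single p (φ.comp A) + DFinsupp.single q (φ.comp B)) = φ u := by
    filter_upwards [hu] with d hd
    simp only [map_add, hΦ]
    rw [← hd]
    simp
  have := hΨG _ _ key
  rw [map_add, hxp, hxp] at this
  rw [map_sub, map_add, sub_eq_zero]
  exact this

end PMod

open PMod in
/-- Lemma 4.2(1): extension of a monomorphism from an interval module on a vertical
segment to a monomorphism from an interval module on a horizontal band. -/
theorem stmt12 {k : Type} [Field k] {S T : Type} [LinearOrder S] [LinearOrder T]
    (M : PersistenceModule k (S × T)) (hfd : ∀ p, FiniteDimensional k (M.V p))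
    (hme : MiddleExact M) (s : S) (JT : Set T) (hJT : IsIntervalLin JT)
    (hub : ∃ ε, ε ∉ JT ∧ ∀ t ∈ JT, t ≤ ε)
    (h : Hom
      (intervalModule k {p : ↥{p : S × T | p.1 = s} | (p : S × T).2 ∈ JT}
        (hJT.2.preimageSnd {p : S × T | p.1 = s}))
      (restrict M {p : S × T | p.1 = s}))
    (hmono : ∀ p, Function.Injective (h.app p)) :
    ∃ H : Hom
      (intervalModule k {p : ↥{p : S × T | p.1 ≤ s} | (p : S × T).2 ∈ JT}
        (hJT.2.preimageSnd {p : S × T | p.1 ≤ s}))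
      (restrict M {p : S × T | p.1 ≤ s}),
      (∀ p, Function.Injective (H.app p)) ∧
      ∀ (t : T) (ht : t ∈ JT),
        H.app ⟨(s, t), le_refl s⟩
          (kGen k (show (⟨(s, t), le_refl s⟩ : ↥{p : S × T | p.1 ≤ s}) ∈
            {p : ↥{p : S × T | p.1 ≤ s} | (p : S × T).2 ∈ JT} from ht)) =
        h.app ⟨(s, t), rfl⟩
          (kGen k (show (⟨(s, t), rfl⟩ : ↥{p : S × T | p.1 = s}) ∈
            {p : ↥{p : S × T | p.1 = s} | (p : S × T).2 ∈ JT} from ht)) := by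
  classical
  have := hfd
  obtain ⟨⟨t₁, ht₁⟩, hconv⟩ := hJT
  obtain ⟨ε₁, hε₁, hε₁'⟩ := hub
  let v : ∀ t, t ∈ JT → M.V (s, t) := fun t ht => h.app ⟨(s, t), rfl⟩
    (kGen k (show (⟨(s, t), rfl⟩ : ↥{p : S × T | p.1 = s}) ∈
            {p : ↥{p : S × T | p.1 = s} | (p : S × T).2 ∈ JT} from ht))
  have hv0 : ∀ t ht, v t ht ≠ 0 := by
    intro t ht h0
    have := hmono ⟨(s, t), rfl⟩ (h0.trans (map_zero _).symm)
    exact one_ne_zero (congrArg Subtype.val this : (1 : k) = 0)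
  have hvmap : ∀ t ht t' ht' (hle : (s, t) ≤ (s, t')), M.map hle (v t ht) = v t' ht' := by
    intro t ht t' ht' hle
    have := LinearMap.congr_fun (h.natural (x := ⟨(s, t), rfl⟩) (y := ⟨(s, t'), rfl⟩) hle)
      (kGen k ht)
    refine this.trans (congrArg (h.app ⟨(s, t'), rfl⟩) ?_)
    apply Subtype.ext
    change ((intervalMap k {p : ↥{p : S × T | p.1 = s} | (p : S × T).2 ∈ JT} hle
      (kGen k ht)).1 : k) = 1
    simp [intervalMap, kGen, ht']
  have hvzero : ∀ t ht t' (_ : t' ∉ JT) (hle : (s, t) ≤ (s, t')), M.map hle (v t ht) = 0 := by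
    intro t ht t' ht' hle
    have := LinearMap.congr_fun (h.natural (x := ⟨(s, t), rfl⟩) (y := ⟨(s, t'), rfl⟩) hle)
      (kGen k ht)
    refine this.trans ((congrArg (h.app ⟨(s, t'), rfl⟩) ?_).trans (map_zero _))
    apply Subtype.ext
    change ((intervalMap k {p : ↥{p : S × T | p.1 = s} | (p : S × T).2 ∈ JT} hle
      (kGen k ht)).1 : k) = 0
    simp [intervalMap, ht']
  let D := {a : S // a ≤ s} × {t : T // t ∈ JT} × {e : T // e ∉ JT ∧ ∀ t ∈ JT, t ≤ e}
  have : Nonempty D := ⟨(⟨s, le_rfl⟩, ⟨t₁, ht₁⟩, ⟨ε₁, hε₁, hε₁'⟩)⟩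
  have hex : ∀ d : D, ∃ w : M.V (d.1.1, d.2.1.1),
      M.map (show (d.1.1, d.2.1.1) ≤ (d.1.1, d.2.2.1) from
        ⟨le_rfl, d.2.2.2.2 _ d.2.1.2⟩) w = 0 ∧
      M.map (show (d.1.1, d.2.1.1) ≤ (s, d.2.1.1) from ⟨d.1.2, le_rfl⟩) w
        = v d.2.1.1 d.2.1.2 := by
    intro d
    apply hme d.1.1 s d.2.1.1 d.2.2.1 d.1.2 (d.2.2.2.2 _ d.2.1.2)
    rw [map_zero, hvzero _ d.2.1.2 _ d.2.2.2.1]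
  choose w hw0 hw1 using hex
  let y : D → ∀ p, M.V p := fun d p =>
    if hp : (d.1.1, d.2.1.1) ≤ p then M.map hp (w d) else 0
  have hcomp : ∀ {a b c : S × T} (hab : a ≤ b) (hbc : b ≤ c) (m : M.V a),
      M.map hbc (M.map hab m) = M.map (hab.trans hbc) m := by
    intro a b c hab hbc m
    rw [M.map_trans hab hbc]; rfl
  obtain ⟨x, hx⟩ := exists_generalized_limit (k := k) M.V (Filter.atBot : Filter D) y
  have hev : ∀ p : S × T, p.1 ≤ s → p.2 ∈ JT →
      ∀ᶠ d : D in Filter.atBot, (d.1.1, d.2.1.1) ≤ p := by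
    intro p hp1 hp2
    filter_upwards [Filter.eventually_le_atBot
      ((⟨p.1, hp1⟩, ⟨p.2, hp2⟩, ⟨ε₁, hε₁, hε₁'⟩) : D)] with d hd
    exact ⟨hd.1, hd.2.1⟩
  have hxmap : ∀ (p q : S × T) (hpq : p ≤ q), q.1 ≤ s → p.2 ∈ JT → q.2 ∈ JT →
      M.map hpq (x p) = x q := by
    intro p q hpq hq hp2 hq2
    have := hx p q (M.V q) (M.map hpq) (-LinearMap.id) 0 (by
      filter_upwards [hev p (hpq.1.trans hq) hp2] with d hd
      simp [y, hd, hd.trans hpq, hcomp])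
    simpa [← sub_eq_add_neg, sub_eq_zero] using this
  have hxzero : ∀ (p q : S × T) (hpq : p ≤ q), q.1 ≤ s → p.2 ∈ JT → q.2 ∉ JT →
      M.map hpq (x p) = 0 := by
    intro p q hpq hq hp2 hq2
    have hqub : ∀ t ∈ JT, t ≤ q.2 := by
      intro t ht
      by_contra hlt
      exact hq2 (hconv _ _ _ hpq.2 (not_le.1 hlt).le hp2 ht)
    have := hx p p (M.V q) (M.map hpq) 0 0 (by
      filter_upwards [hev p (hpq.1.trans hq) hp2, Filter.eventually_le_atBot
        ((⟨s, le_rfl⟩, ⟨t₁, ht₁⟩, ⟨q.2, hq2, hqub⟩) : D)] with d hd hd'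
      have hle : (d.1.1, d.2.2.1) ≤ q := ⟨hd.1.trans hpq.1, hd'.2.2⟩
      have h2 := hcomp (show (d.1.1, d.2.1.1) ≤ (d.1.1, d.2.2.1) from
        ⟨le_rfl, d.2.2.2.2 _ d.2.1.2⟩) hle (w d)
      rw [hw0, map_zero] at h2
      simp [y, hd, hcomp, ← h2])
    simpa using this
  have hxs : ∀ t ht, x (s, t) = v t ht := by
    intro t ht
    have := hx (s, t) (s, t) (M.V (s, t)) LinearMap.id 0 (v t ht) (by
      filter_upwards [hev (s, t) le_rfl ht] with d hd
      have h2 := hcomp (show (d.1.1, d.2.1.1) ≤ (s, d.2.1.1) from ⟨d.1.2, le_rfl⟩)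
        (show (s, d.2.1.1) ≤ (s, t) from ⟨le_rfl, hd.2⟩) (w d)
      rw [hw1, hvmap _ d.2.1.2 _ ht] at h2
      simp [y, hd, ← h2])
    simpa using this
  refine ⟨⟨fun p => (LinearMap.toSpanSingleton k (M.V p.1) (x p.1)).comp
    (Submodule.subtype _), ?_⟩, ?_, ?_⟩
  · intro p q hpq
    apply LinearMap.ext
    intro (m : ↥(kMod k {p : ↥{p : S × T | p.1 ≤ s} | (p : S × T).2 ∈ JT} p))
    change M.map hpq ((m : k) • x p.1) =
      ((intervalMap k {p : ↥{p : S × T | p.1 ≤ s} | (p : S × T).2 ∈ JT} hpq m : k)) • x q.1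
    by_cases hp : p.1.2 ∈ JT
    · by_cases hq : q.1.2 ∈ JT
      · rw [map_smul, hxmap _ _ _ q.2 hp hq]
        simp [intervalMap, hq]
      · rw [map_smul, hxzero _ _ _ q.2 hp hq]
        simp [intervalMap, hq]
    · have hm : (m : k) = 0 := kMod_coe_eq_zero k hp m
      have hm' : m = 0 := Subtype.ext hm
      rw [hm']
      simp
  · intro p
    rw [injective_iff_map_eq_zero]
    intro (m : ↥(kMod k {p : ↥{p : S × T | p.1 ≤ s} | (p : S × T).2 ∈ JT} p)) hm
    change (m : k) • x p.1 = 0 at hm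
    apply Subtype.ext
    by_cases hp : p.1.2 ∈ JT
    · rcases smul_eq_zero.1 hm with h0 | h0
      · exact h0
      · exfalso
        have hle : p.1 ≤ (s, p.1.2) := ⟨p.2, le_rfl⟩
        have := hxmap _ _ hle le_rfl hp hp
        rw [h0, map_zero, hxs _ hp] at this
        exact hv0 _ hp this.symm
    · exact kMod_coe_eq_zero k hp m
  · intro t ht
    change (1 : k) • x (s, t) = v t ht
    rw [one_smul, hxs t ht]
end

section
/- Let k be a field, S and T totally ordered sets, and M a pointwise finite-dimensional, middle exact, indecomposable persistence module over S × T. Suppose there exist x ≤ x' in S and y ≤ y' in T with, setting a = (x,y), b = (x,y'), c = (x',y), Ker(M_{ba}) ∩ Ker(M_{ca}) ≠ 0. Then M ≅ k_I for a block I of type (db), i.e., I = J_S × J_T with J_S ⊆ S and J_T ⊆ T interval ideals. -/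
namespace PMod

theorem map_map_apply {k : Type} [Field k] {P : Type} [Preorder P] (M : PersistenceModule k P)
    {p q r : P} (hpq : p ≤ q) (hqr : q ≤ r) (v : M.V p) :
    M.map hqr (M.map hpq v) = M.map (le_trans hpq hqr) v := by
  rw [M.map_trans hpq hqr]; rfl

theorem map_refl_apply {k : Type} [Field k] {P : Type} [Preorder P] (M : PersistenceModule k P)
    {p : P} (h : p ≤ p) (v : M.V p) : M.map h v = v := by
  rw [M.map_refl p]; rfl

/-- Existence of directed colimits. -/
theorem exists_colim {k : Type} [Field k] {P : Type} [Preorder P] [IsDirectedOrder P]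
    (N : PersistenceModule k P) :
    ∃ (L : Type) (_ : AddCommGroup L) (_ : Module k L) (ι : ∀ p, N.V p →ₗ[k] L),
      (∀ (p q : P) (h : p ≤ q) (v : N.V p), ι q (N.map h v) = ι p v) ∧
      (∀ p (v : N.V p), ι p v = 0 → ∃ q, ∃ h : p ≤ q, N.map h v = 0) := by
  classical
  let f : ∀ i j : P, i ≤ j → N.V i →ₗ[k] N.V j := fun i j h => N.map h
  have : DirectedSystem N.V (fun i j h => f i j h) :=
    ⟨fun i x => map_refl_apply N _ x, fun _ _ _ hij hjk x => map_map_apply N hij hjk x⟩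
  refine ⟨Module.DirectLimit N.V f, inferInstance, inferInstance,
    fun p => Module.DirectLimit.of k P N.V f p, ?_, ?_⟩
  · intro p q h v
    exact Module.DirectLimit.of_f (f := f) (hij := h)
  · intro p v hv
    exact Module.DirectLimit.of.zero_exact hv

/-- An element which never dies supports a compatible family of functionals. -/
theorem exists_functional {k : Type} [Field k] {P : Type} [Preorder P] [IsDirectedOrder P]
    (N : PersistenceModule k P) (a : P) (m : N.V a)
    (hm : ∀ q (h : a ≤ q), N.map h m ≠ 0) :
    ∃ φ : ∀ p, N.V p →ₗ[k] k,
      (∀ (p q : P) (h : p ≤ q) (v : N.V p), φ q (N.map h v) = φ p v) ∧ φ a m = 1 := by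
  obtain ⟨L, _, _, ι, h1, h2⟩ := exists_colim N
  have hne : ι a m ≠ 0 := fun h0 => by
    obtain ⟨q, h, hq⟩ := h2 a m h0
    exact hm q h hq
  obtain ⟨f, hf⟩ := Module.Projective.exists_dual_eq_one k hne
  refine ⟨fun p => f ∘ₗ ι p, ?_, hf⟩
  intro p q h v
  simp [h1]

/-- The pointwise dual persistence module. -/
noncomputable def dualMod {k : Type} [Field k] {P : Type} [Preorder P]
    (N : PersistenceModule k P) : PersistenceModule k Pᵒᵈ where
  V p := Module.Dual k (N.V (OrderDual.ofDual p))
  map h := (N.map (OrderDual.ofDual_le_ofDual.mpr h)).dualMap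
  map_refl p := by
    ext f v
    simp [map_refl_apply]
  map_trans h1 h2 := by
    ext f v
    simp [map_map_apply]

/-- Linear compactness: elements lift to the inverse limit of a codirected system of
surjections between finite-dimensional spaces. -/
theorem exists_lift_s13 {k : Type} [Field k] {P : Type} [Preorder P] [IsCodirectedOrder P]
    (N : PersistenceModule k P) (hfd : ∀ p, FiniteDimensional k (N.V p))
    (hs : ∀ (p q : P) (h : p ≤ q), Function.Surjective (N.map h)) (a : P) (m : N.V a) :
    ∃ c : ∀ p, N.V p, (∀ (p q : P) (h : p ≤ q), N.map h (c p) = c q) ∧ c a = m := by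
  obtain ⟨L, _, _, ι, h1, h2⟩ := exists_colim (dualMod N)
  have hinj : Function.Injective (ι (OrderDual.toDual a)) := by
    rw [injective_iff_map_eq_zero]
    intro f hf
    obtain ⟨q, h, hq⟩ := h2 _ f hf
    have := hs (OrderDual.ofDual q) a h
    exact (LinearMap.dualMap_injective_of_surjective this) (hq.trans (map_zero _).symm)
  obtain ⟨r, hr⟩ := LinearMap.exists_leftInverse_of_injective _ (LinearMap.ker_eq_bot.mpr hinj)
  let F : L →ₗ[k] k := (Module.Dual.eval k (N.V a) m) ∘ₗ r
  let c : ∀ p, N.V p := fun p => (Module.evalEquiv k (N.V p)).symm (F ∘ₗ ι (OrderDual.toDual p))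
  have hc : ∀ p (f : Module.Dual k (N.V p)), f (c p) = F (ι (OrderDual.toDual p) f) := by
    intro p f
    simp only [c]
    rw [Module.apply_evalEquiv_symm_apply]
    rfl
  refine ⟨c, ?_, ?_⟩
  · intro p q h
    rw [← sub_eq_zero, ← Module.forall_dual_apply_eq_zero_iff k]
    intro f
    rw [map_sub, sub_eq_zero, hc]
    have := hc p (f ∘ₗ N.map h)
    rw [LinearMap.comp_apply] at this
    rw [this]
    congr 1
    exact h1 (OrderDual.toDual q) (OrderDual.toDual p) h f
  · rw [← sub_eq_zero, ← Module.forall_dual_apply_eq_zero_iff k]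
    intro f
    rw [map_sub, sub_eq_zero, hc]
    have : r (ι (OrderDual.toDual a) f) = f := LinearMap.congr_fun hr f
    change Module.Dual.eval k (N.V a) m (r (ι (OrderDual.toDual a) f)) = f m
    rw [this]
    rfl

/-- The kernel of a morphism. -/
def kerMod {k : Type} [Field k] {P : Type} [Preorder P] {M N : PersistenceModule k P}
    (f : Hom M N) : PersistenceModule k P where
  V p := LinearMap.ker (f.app p)
  map {p q} h := (M.map h).restrict (p := LinearMap.ker (f.app p))
    (q := LinearMap.ker (f.app q)) (fun v hv => by
      have := LinearMap.congr_fun (f.natural h) v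
      simp only [LinearMap.comp_apply] at this
      rw [LinearMap.mem_ker] at hv ⊢
      rw [← this, hv, map_zero])
  map_refl p := by
    ext v
    simp [map_refl_apply]
  map_trans h1 h2 := by
    ext v
    simp [map_map_apply]

/-- A split epimorphism from an indecomposable onto a nonzero module is an isomorphism. -/
theorem isIso_of_split {k : Type} [Field k] {P : Type} [Preorder P]
    {M N : PersistenceModule k P} (hind : Indecomposable M) (hN : ¬ IsZero N)
    (f : Hom M N) (g : Hom N M) (hfg : ∀ p v, f.app p (g.app p v) = v) : IsIsoHom f := by
  have nf : ∀ {p q : P} (h : p ≤ q) v, N.map h (f.app p v) = f.app q (M.map h v) :=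
    fun h v => LinearMap.congr_fun (f.natural h) v
  have ng : ∀ {p q : P} (h : p ≤ q) v, M.map h (g.app p v) = g.app q (N.map h v) :=
    fun h v => LinearMap.congr_fun (g.natural h) v
  have iso : Isomorphic M (sum2 N (kerMod f)) := by
    refine ⟨⟨fun p => LinearMap.prod (f.app p)
      (LinearMap.codRestrict (LinearMap.ker (f.app p))
        (LinearMap.id - (g.app p) ∘ₗ (f.app p)) (fun v => by simp [hfg])), ?_⟩, ?_⟩
    · intro p q h
      refine LinearMap.ext fun v => ?_
      refine Prod.ext (nf h v) (Subtype.ext ?_)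
      change M.map h (v - g.app p (f.app p v)) = M.map h v - g.app q (f.app q (M.map h v))
      rw [map_sub, ng, nf]
    · intro p
      constructor
      · intro v w hvw
        have e1 : f.app p v = f.app p w := congrArg Prod.fst hvw
        have e2 : v - g.app p (f.app p v) = w - g.app p (f.app p w) :=
          congrArg (fun z : N.V p × LinearMap.ker (f.app p) => (z.2 : M.V p)) hvw
        rw [e1] at e2
        exact sub_left_injective e2
      · rintro ⟨n, ⟨u, hu⟩⟩
        rw [LinearMap.mem_ker] at hu
        refine ⟨g.app p n + u, Prod.ext ?_ (Subtype.ext ?_)⟩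
        · change f.app p (g.app p n + u) = n
          rw [map_add, hfg, hu, add_zero]
        · change g.app p n + u - g.app p (f.app p (g.app p n + u)) = u
          rw [map_add, hfg, hu, add_zero, add_sub_cancel_left]
  rcases hind.2 _ _ iso with h | h
  · exact absurd h hN
  · intro p
    constructor
    · rw [injective_iff_map_eq_zero]
      intro v hv
      exact congrArg Subtype.val (h p ⟨v, hv⟩)
    · intro n
      exact ⟨g.app p n, hfg p n⟩

/-- Injectivity of `k_J` for a directed down-set `J`, and indecomposability. -/
theorem iso_of_family {k : Type} [Field k] {P : Type} [Preorder P]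
    (M : PersistenceModule k P) (hind : Indecomposable M) (J : Set P) (hJ : IsIdeal J)
    (hdir : ∀ p ∈ J, ∀ q ∈ J, ∃ r ∈ J, p ≤ r ∧ q ≤ r)
    (hconv : IsConvex J) (a : P) (ha : a ∈ J) (c : ∀ p, M.V p)
    (hc : ∀ (p q : P) (h : p ≤ q), q ∈ J → M.map h (c p) = c q)
    (hc0 : ∀ (p q : P) (h : p ≤ q), p ∈ J → q ∉ J → M.map h (c p) = 0)
    (hne : ∀ p ∈ J, a ≤ p → c p ≠ 0) :
    Isomorphic M (intervalModule k J hconv) := by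
  classical
  have : IsDirectedOrder J := ⟨fun p q => by
    obtain ⟨r, hr, h1, h2⟩ := hdir p p.2 q q.2
    exact ⟨⟨r, hr⟩, h1, h2⟩⟩
  obtain ⟨φ, hφ, hφa⟩ := exists_functional (restrict M J) ⟨a, ha⟩ (c a) (by
    intro q h
    have h' : a ≤ (q : P) := h
    have := hc a q h' q.2
    change M.map h' (c a) ≠ 0
    rw [this]
    exact hne q q.2 h')
  have hφ' : ∀ (p q : P) (hp : p ∈ J) (hq : q ∈ J) (h : p ≤ q) (v : M.V p),
      φ ⟨q, hq⟩ (M.map h v) = φ ⟨p, hp⟩ v := fun p q hp hq h v => hφ ⟨p, hp⟩ ⟨q, hq⟩ h v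
  have hφ1 : ∀ p (hp : p ∈ J), φ ⟨p, hp⟩ (c p) = 1 := by
    intro p hp
    obtain ⟨r, hr, h1, h2⟩ := hdir p hp a ha
    have e1 := hφ' p r hp hr h1 (c p)
    have e2 := hφ' a r ha hr h2 (c a)
    rw [hc _ _ _ hr] at e1 e2
    rw [← e1, e2]
    exact hφa
  let F : ∀ p, M.V p →ₗ[k] kMod k J p := fun p => if hp : p ∈ J then
      LinearMap.codRestrict (kMod k J p) (φ ⟨p, hp⟩) (fun v => by simp [kMod, hp]) else 0
  have hF : ∀ p (hp : p ∈ J) v, ((F p v : kMod k J p) : k) = φ ⟨p, hp⟩ v := by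
    intro p hp v
    simp only [F, dif_pos hp]
    rfl
  let G : ∀ p, kMod k J p →ₗ[k] M.V p := fun p =>
      (LinearMap.toSpanSingleton k (M.V p) (c p)) ∘ₗ (kMod k J p).subtype
  have hG : ∀ p (v : kMod k J p), G p v = (v : k) • c p := fun p v => rfl
  let f : Hom M (intervalModule k J hconv) :=
    { app := F
      natural := by
        intro p q h
        refine LinearMap.ext fun v => Subtype.ext ?_
        by_cases hq : q ∈ J
        · have hp := hJ p q h hq
          change ((intervalMap k J h (F p v) : kMod k J q) : k) = (F q (M.map h v) : kMod k J q)
          rw [hF q hq, hφ' p q hp hq, ← hF p hp]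
          simp [intervalMap, hq]
        · exact (kMod_coe_eq_zero k hq _).trans (kMod_coe_eq_zero k hq _).symm }
  let g : Hom (intervalModule k J hconv) M :=
    { app := G
      natural := by
        intro p q h
        refine LinearMap.ext fun (v : kMod k J p) => ?_
        change M.map h (G p v) = G q (intervalMap k J h v)
        rw [hG, hG, map_smul]
        by_cases hq : q ∈ J
        · rw [hc p q h hq]
          simp [intervalMap, hq]
        · rw [kMod_coe_eq_zero k hq, zero_smul]
          by_cases hp : p ∈ J
          · rw [hc0 p q h hp hq, smul_zero]
          · rw [kMod_coe_eq_zero k hp, zero_smul] }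
  refine ⟨f, isIso_of_split hind ?_ f g ?_⟩
  · intro h0
    have := congrArg Subtype.val (h0 a (kGen k ha))
    exact one_ne_zero this
  · intro p (v : kMod k J p)
    refine Subtype.ext ?_
    change ((F p (G p v) : kMod k J p) : k) = v
    by_cases hp : p ∈ J
    · have h1 := hφ1 p hp
      rw [hF p hp, hG]
      refine ((φ ⟨p, hp⟩).map_smul (v : k) (c p)).trans ?_
      rw [h1, smul_eq_mul, mul_one]
    · exact (kMod_coe_eq_zero k hp _).trans (kMod_coe_eq_zero k hp _).symm

variable {k : Type} [Field k] {S T : Type} [LinearOrder S] [LinearOrder T]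

/-- A good choice of the element in the common kernel. -/
theorem exists_good_s13 (M : PersistenceModule k (S × T)) (hfd : ∀ p, FiniteDimensional k (M.V p))
    (hme : MiddleExact M)
    (x x' : S) (hx : x ≤ x') (y y' : T) (hy : y ≤ y')
    (hker : ∃ m : M.V (x, y), m ≠ 0 ∧
      M.map (show (x, y) ≤ (x, y') from ⟨le_refl x, hy⟩) m = 0 ∧
      M.map (show (x, y) ≤ (x', y) from ⟨hx, le_refl y⟩) m = 0) :
    ∃ (m : M.V (x, y)) (s0 : S) (hs0 : x ≤ s0) (t0 : T) (ht0 : y ≤ t0), m ≠ 0 ∧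
      M.map (show (x, y) ≤ (x, t0) from ⟨le_refl x, ht0⟩) m = 0 ∧
      M.map (show (x, y) ≤ (s0, y) from ⟨hs0, le_refl y⟩) m = 0 ∧
      ∀ (s : S) (hs : x ≤ s) (t : T) (ht : y ≤ t),
        M.map (show (x, y) ≤ (x, t) from ⟨le_refl x, ht⟩) m ≠ 0 →
        M.map (show (x, y) ≤ (s, y) from ⟨hs, le_refl y⟩) m ≠ 0 →
        M.map (show (x, y) ≤ (s, t) from ⟨hs, ht⟩) m ≠ 0 := by
  classical
  have := hfd (x, y)
  let K : Set.Ici x → Submodule k (M.V (x, y)) := fun s =>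
    LinearMap.ker (M.map (show (x, y) ≤ ((s : S), y) from ⟨s.2, le_refl y⟩))
  let L : Set.Ici y → Submodule k (M.V (x, y)) := fun t =>
    LinearMap.ker (M.map (show (x, y) ≤ (x, (t : T)) from ⟨le_refl x, t.2⟩))
  have Kmono : Monotone K := by
    intro s s' h v hv
    have h' : (s : S) ≤ s' := h
    simp only [K, LinearMap.mem_ker] at hv ⊢
    rw [← map_map_apply M (show (x, y) ≤ ((s : S), y) from ⟨s.2, le_refl y⟩)
      (show ((s : S), y) ≤ ((s' : S), y) from ⟨h', le_refl y⟩), hv, map_zero]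
  have Lmono : Monotone L := by
    intro s s' h v hv
    have h' : (s : T) ≤ s' := h
    simp only [L, LinearMap.mem_ker] at hv ⊢
    rw [← map_map_apply M (show (x, y) ≤ (x, (s : T)) from ⟨le_refl x, s.2⟩)
      (show (x, (s : T)) ≤ (x, (s' : T)) from ⟨le_refl x, h'⟩), hv, map_zero]
  let A : Set (Submodule k (M.V (x, y))) :=
    {W | W ≠ ⊥ ∧ ∃ s t, W = K s ⊓ L t}
  have hA : A.Nonempty := by
    obtain ⟨m, hm, h1, h2⟩ := hker
    refine ⟨K ⟨x', hx⟩ ⊓ L ⟨y', hy⟩, ?_, _, _, rfl⟩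
    intro h0
    have : m ∈ K ⟨x', hx⟩ ⊓ L ⟨y', hy⟩ := ⟨h2, h1⟩
    rw [h0] at this
    exact hm this
  obtain ⟨W, ⟨hW, ⟨s0, t0, hst⟩⟩, hmin⟩ :=
    (wellFounded_lt (α := Submodule k (M.V (x, y)))).has_min A hA
  obtain ⟨m, hmW, hm0⟩ := Submodule.exists_mem_ne_zero_of_ne_bot hW
  have hmK : m ∈ K s0 := (hst ▸ hmW : m ∈ K s0 ⊓ L t0).1
  have hmL : m ∈ L t0 := (hst ▸ hmW : m ∈ K s0 ⊓ L t0).2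
  refine ⟨m, s0, s0.2, t0, t0.2, hm0, hmL, hmK, ?_⟩
  intro s hs t ht hmt hms hmst
  have hs' : K ⟨s, hs⟩ ≤ K s0 := by
    rcases le_total (⟨s, hs⟩ : Set.Ici x) s0 with h | h
    · exact Kmono h
    · exact absurd (Kmono h hmK) hms
  have ht' : L ⟨t, ht⟩ ≤ L t0 := by
    rcases le_total (⟨t, ht⟩ : Set.Ici y) t0 with h | h
    · exact Lmono h
    · exact absurd (Lmono h hmL) hmt
  have b1 : K ⟨s, hs⟩ ⊓ L t0 = ⊥ := by
    by_contra hne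
    refine hmin _ ⟨hne, _, _, rfl⟩ ?_
    rw [hst]
    refine lt_of_le_of_ne (inf_le_inf_right _ hs') ?_
    intro e
    have : m ∈ K ⟨s, hs⟩ ⊓ L t0 := e ▸ ⟨hmK, hmL⟩
    exact hms this.1
  have b2 : K s0 ⊓ L ⟨t, ht⟩ = ⊥ := by
    by_contra hne
    refine hmin _ ⟨hne, _, _, rfl⟩ ?_
    rw [hst]
    refine lt_of_le_of_ne (inf_le_inf_left _ ht') ?_
    intro e
    have : m ∈ K s0 ⊓ L ⟨t, ht⟩ := e ▸ ⟨hmK, hmL⟩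
    exact hmt this.2
  obtain ⟨v, hv1, hv2⟩ := hme x s y t hs ht 0
    (M.map (show (x, y) ≤ (s, y) from ⟨hs, le_refl y⟩) m) (by
      rw [map_zero, map_map_apply, hmst])
  have hvL : v ∈ L ⟨t, ht⟩ := hv1
  have huK : m - v ∈ K ⟨s, hs⟩ := by
    simp only [K, LinearMap.mem_ker, map_sub]
    rw [hv2, sub_self]
  have huL : m - v ∈ L t0 := sub_mem hmL (ht' hvL)
  have hu0 : m - v = 0 := by
    have : m - v ∈ K ⟨s, hs⟩ ⊓ L t0 := ⟨huK, huL⟩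
    rw [b1] at this
    exact this
  have hv0 : v = 0 := by
    have hvK : v ∈ K s0 := by
      rw [← sub_eq_zero.mp hu0]
      exact hmK
    have : v ∈ K s0 ⊓ L ⟨t, ht⟩ := ⟨hvK, hvL⟩
    rw [b2] at this
    exact this
  rw [hv0, sub_zero] at hu0
  exact hm0 hu0

/-- Elements dying outside of `JS × JT`. -/
def deadSub (M : PersistenceModule k (S × T)) (JS : Set S) (JT : Set T) (p : S × T) :
    Submodule k (M.V p) where
  carrier := {v | ∀ q (h : p ≤ q), q ∉ JS ×ˢ JT → M.map h v = 0}
  zero_mem' := fun q h _ => map_zero _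
  add_mem' := by
    intro v w hv hw q h hq
    rw [map_add, hv q h hq, hw q h hq, add_zero]
  smul_mem' := by
    intro r v hv q h hq
    rw [map_smul, hv q h hq, smul_zero]

theorem map_deadSub (M : PersistenceModule k (S × T)) (JS : Set S) (JT : Set T) {p q : S × T}
    (h : p ≤ q) (v : M.V p) (hv : v ∈ deadSub M JS JT p) : M.map h v ∈ deadSub M JS JT q := by
  intro r hr hrJ
  rw [map_map_apply]
  exact hv r _ hrJ

/-- The subsystem of elements dying outside of `JS × JT`, below `a`. -/
def deadMod (M : PersistenceModule k (S × T)) (JS : Set S) (JT : Set T) (a : S × T) :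
    PersistenceModule k (Set.Iic a) where
  V p := deadSub M JS JT p
  map {p q} h := (M.map (show (p : S × T) ≤ q from h)).restrict
    (p := deadSub M JS JT p) (q := deadSub M JS JT q) (fun v hv => map_deadSub M JS JT h v hv)
  map_refl p := by
    ext v
    simp [map_refl_apply]
  map_trans h1 h2 := by
    ext v
    simp [map_map_apply]

theorem mem_deadSub_iff (M : PersistenceModule k (S × T)) (JS : Set S) (JT : Set T)
    (s : S) (t : T) (hs : s ∈ JS) (ht : t ∈ JT) (v : M.V (s, t)) : v ∈ deadSub M JS JT (s, t) ↔
      (∀ s' (h : s ≤ s'), s' ∉ JS → M.map (show (s, t) ≤ (s', t) from ⟨h, le_refl t⟩) v = 0) ∧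
      (∀ t' (h : t ≤ t'), t' ∉ JT → M.map (show (s, t) ≤ (s, t') from ⟨le_refl s, h⟩) v = 0) := by
  constructor
  · intro hv
    exact ⟨fun s' h hs' => hv _ _ (fun hh => hs' hh.1), fun t' h ht' => hv _ _ (fun hh => ht' hh.2)⟩
  · rintro ⟨h1, h2⟩ ⟨s', t'⟩ h hq
    have hh1 : s ≤ s' := h.1
    have hh2 : t ≤ t' := h.2
    by_cases hs' : s' ∈ JS
    · have ht' : t' ∉ JT := fun ht' => hq ⟨hs', ht'⟩
      rw [← map_map_apply M (show (s, t) ≤ (s, t') from ⟨le_refl s, hh2⟩)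
        (show (s, t') ≤ (s', t') from ⟨hh1, le_refl t'⟩), h2 _ hh2 ht', map_zero]
    · rw [← map_map_apply M (show (s, t) ≤ (s', t) from ⟨hh1, le_refl t⟩)
        (show (s', t) ≤ (s', t') from ⟨le_refl s', hh2⟩), h1 _ hh1 hs', map_zero]

/-- A chain of kernels attains its minimum. -/
theorem exists_min_ker {V : Type} [AddCommGroup V] [Module k V] [FiniteDimensional k V]
    {I : Type} [LinearOrder I] [Nonempty I] (K : I → Submodule k V) (hK : Monotone K) :
    ∃ i, ∀ j, K i ≤ K j := by
  obtain ⟨W, ⟨i, rfl⟩, hmin⟩ :=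
    (wellFounded_lt (α := Submodule k V)).has_min (Set.range K) (Set.range_nonempty K)
  refine ⟨i, fun j => ?_⟩
  rcases le_total i j with h | h
  · exact hK h
  · rcases (hK h).lt_or_eq with h' | h'
    · exact absurd h' (hmin _ ⟨j, rfl⟩)
    · exact h'.ge

theorem surj_left (M : PersistenceModule k (S × T)) (hfd : ∀ p, FiniteDimensional k (M.V p))
    (hme : MiddleExact M) (JS : Set S) (JT : Set T) (hJS : IsIdeal JS) (hJT : IsIdeal JT)
    (t0 : T) (ht0 : t0 ∉ JT) (s s' : S) (t : T) (h : s ≤ s') (hs' : s' ∈ JS) (ht : t ∈ JT)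
    (n : M.V (s', t)) (hn : n ∈ deadSub M JS JT (s', t)) :
    ∃ v ∈ deadSub M JS JT (s, t),
      M.map (show (s, t) ≤ (s', t) from ⟨h, le_refl t⟩) v = n := by
  have := hfd (s, t)
  have hlt : ∀ u : T, u ∉ JT → t ≤ u := fun u hu => by
    rcases le_total t u with h | h
    · exact h
    · exact absurd (hJT u t h ht) hu
  let I := {u : T // u ∉ JT}
  have : Nonempty I := ⟨⟨t0, ht0⟩⟩
  obtain ⟨u, hu⟩ := exists_min_ker (I := I) (fun u => LinearMap.ker
    (M.map (show (s, t) ≤ (s, (u : T)) from ⟨le_refl s, hlt u u.2⟩))) (by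
      intro u w huw v hv
      have h' : (u : T) ≤ w := huw
      simp only [LinearMap.mem_ker] at hv ⊢
      rw [← map_map_apply M (show (s, t) ≤ (s, (u : T)) from ⟨le_refl s, hlt u u.2⟩)
        (show (s, (u : T)) ≤ (s, (w : T)) from ⟨le_refl s, h'⟩), hv, map_zero])
  rw [mem_deadSub_iff M JS JT s' t hs' ht] at hn
  obtain ⟨v, hv1, hv2⟩ := hme s s' t u h (hlt u u.2) 0 n (by
    rw [map_zero, hn.2 u (hlt u u.2) u.2])
  refine ⟨v, ?_, hv2⟩
  rw [mem_deadSub_iff M JS JT s t (hJS _ _ h hs') ht]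
  constructor
  · intro r hr hrJ
    have hsr : s' ≤ r := by
      rcases le_total s' r with h | h
      · exact h
      · exact absurd (hJS r s' h hs') hrJ
    rw [← map_map_apply M (show (s, t) ≤ (s', t) from ⟨h, le_refl t⟩)
        (show (s', t) ≤ (r, t) from ⟨hsr, le_refl t⟩), hv2, hn.1 _ hsr hrJ]
  · intro w hw hwJ
    exact hu ⟨w, hwJ⟩ hv1

theorem surj_down (M : PersistenceModule k (S × T)) (hfd : ∀ p, FiniteDimensional k (M.V p))
    (hme : MiddleExact M) (JS : Set S) (JT : Set T) (hJS : IsIdeal JS) (hJT : IsIdeal JT)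
    (s0 : S) (hs0 : s0 ∉ JS) (s : S) (t t' : T) (h : t ≤ t') (hs : s ∈ JS) (ht' : t' ∈ JT)
    (n : M.V (s, t')) (hn : n ∈ deadSub M JS JT (s, t')) :
    ∃ v ∈ deadSub M JS JT (s, t),
      M.map (show (s, t) ≤ (s, t') from ⟨le_refl s, h⟩) v = n := by
  have := hfd (s, t)
  have hlt : ∀ u : S, u ∉ JS → s ≤ u := fun u hu => by
    rcases le_total s u with h | h
    · exact h
    · exact absurd (hJS u s h hs) hu
  let I := {u : S // u ∉ JS}
  have : Nonempty I := ⟨⟨s0, hs0⟩⟩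
  obtain ⟨u, hu⟩ := exists_min_ker (I := I) (fun u => LinearMap.ker
    (M.map (show (s, t) ≤ ((u : S), t) from ⟨hlt u u.2, le_refl t⟩))) (by
      intro u w huw v hv
      have h' : (u : S) ≤ w := huw
      simp only [LinearMap.mem_ker] at hv ⊢
      rw [← map_map_apply M (show (s, t) ≤ ((u : S), t) from ⟨hlt u u.2, le_refl t⟩)
        (show ((u : S), t) ≤ ((w : S), t) from ⟨h', le_refl t⟩), hv, map_zero])
  rw [mem_deadSub_iff M JS JT s t' hs ht'] at hn
  obtain ⟨v, hv1, hv2⟩ := hme s u t t' (hlt u u.2) h n 0 (by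
    rw [map_zero, hn.1 u (hlt u u.2) u.2])
  refine ⟨v, ?_, hv1⟩
  rw [mem_deadSub_iff M JS JT s t hs (hJT _ _ h ht')]
  constructor
  · intro w hw hwJ
    exact hu ⟨w, hwJ⟩ hv2
  · intro r hr hrJ
    have hsr : t' ≤ r := by
      rcases le_total t' r with h | h
      · exact h
      · exact absurd (hJT r t' h ht') hrJ
    rw [← map_map_apply M (show (s, t) ≤ (s, t') from ⟨le_refl s, h⟩)
        (show (s, t') ≤ (s, r) from ⟨le_refl s, hsr⟩), hv1, hn.2 _ hsr hrJ]

end PMod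

open PMod in
/-- Lemma 4.3: an indecomposable pointwise finite-dimensional middle exact module with
a nonzero common kernel element is a block module of type (db). -/
theorem stmt13 {k : Type} [Field k] {S T : Type} [LinearOrder S] [LinearOrder T]
    (M : PersistenceModule k (S × T)) (hfd : ∀ p, FiniteDimensional k (M.V p))
    (hme : MiddleExact M) (hind : Indecomposable M)
    (x x' : S) (hx : x ≤ x') (y y' : T) (hy : y ≤ y')
    (hker : ∃ m : M.V (x, y), m ≠ 0 ∧
      M.map (show (x, y) ≤ (x, y') from ⟨le_refl x, hy⟩) m = 0 ∧
      M.map (show (x, y) ≤ (x', y) from ⟨hx, le_refl y⟩) m = 0) :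
    ∃ (JS : Set S) (JT : Set T)
      (h : (IsIntervalLin JS ∧ IsIdeal JS) ∧ (IsIntervalLin JT ∧ IsIdeal JT)),
      Isomorphic M (intervalModule k (JS ×ˢ JT) (h.1.1.2.prod h.2.1.2)) := by
  obtain ⟨m, s0, hs0, t0, ht0, hm0, hmt0, hms0, hgood⟩ :=
    exists_good_s13 M hfd hme x x' hx y y' hy hker
  let JS : Set S := {s | ∀ h : x ≤ s, M.map (show (x, y) ≤ (s, y) from ⟨h, le_refl y⟩) m ≠ 0}
  let JT : Set T := {t | ∀ h : y ≤ t, M.map (show (x, y) ≤ (x, t) from ⟨le_refl x, h⟩) m ≠ 0}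
  have hJS : IsIdeal JS := by
    intro p q hpq hq hp h0
    refine hq (hp.trans hpq) ?_
    rw [← map_map_apply M (show (x, y) ≤ (p, y) from ⟨hp, le_refl y⟩)
      (show (p, y) ≤ (q, y) from ⟨hpq, le_refl y⟩), h0, map_zero]
  have hJT : IsIdeal JT := by
    intro p q hpq hq hp h0
    refine hq (hp.trans hpq) ?_
    rw [← map_map_apply M (show (x, y) ≤ (x, p) from ⟨le_refl x, hp⟩)
      (show (x, p) ≤ (x, q) from ⟨le_refl x, hpq⟩), h0, map_zero]
  have hxJ : x ∈ JS := fun h => by rw [map_refl_apply]; exact hm0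
  have hyJ : y ∈ JT := fun h => by rw [map_refl_apply]; exact hm0
  have hs0J : s0 ∉ JS := fun h => h hs0 hms0
  have ht0J : t0 ∉ JT := fun h => h ht0 hmt0
  have hmdead : m ∈ deadSub M JS JT (x, y) := by
    rw [mem_deadSub_iff M JS JT x y hxJ hyJ]
    constructor
    · intro s h hs
      by_contra h0
      exact hs (fun _ => h0)
    · intro s h hs
      by_contra h0
      exact hs (fun _ => h0)
  refine ⟨JS, JT, ⟨⟨⟨⟨x, hxJ⟩, hJS.isConvex⟩, hJS⟩, ⟨⟨y, hyJ⟩, hJT.isConvex⟩, hJT⟩, ?_⟩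
  have : IsCodirectedOrder (Set.Iic ((x, y) : S × T)) := ⟨fun p q =>
    ⟨⟨(p : S × T) ⊓ q, Set.mem_Iic.mpr (le_trans inf_le_left p.2)⟩,
      show (p : S × T) ⊓ q ≤ p from inf_le_left, show (p : S × T) ⊓ q ≤ q from inf_le_right⟩⟩
  obtain ⟨c, hc, hca⟩ := exists_lift_s13 (deadMod M JS JT (x, y))
    (fun p => by
      have := hfd p
      exact inferInstanceAs (FiniteDimensional k (deadSub M JS JT p)))
    (by
      rintro ⟨⟨s, t⟩, hp⟩ ⟨⟨s', t'⟩, hq⟩ h ⟨n, hn⟩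
      have h1 : s ≤ s' := h.1
      have h2 : t ≤ t' := h.2
      have hs' : s' ∈ JS := hJS _ _ hq.1 hxJ
      have ht' : t' ∈ JT := hJT _ _ hq.2 hyJ
      obtain ⟨v, hv, hvn⟩ := surj_left M hfd hme JS JT hJS hJT t0 ht0J s s' t' h1 hs' ht' n hn
      obtain ⟨w, hw, hwv⟩ := surj_down M hfd hme JS JT hJS hJT s0 hs0J s t t' h2
        (hJS _ _ h1 hs') ht' v hv
      refine ⟨⟨w, hw⟩, Subtype.ext ?_⟩
      change M.map (show (s, t) ≤ (s', t') from ⟨h1, h2⟩) w = n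
      rw [← hvn, ← hwv, map_map_apply])
    ⟨(x, y), Set.mem_Iic.mpr le_rfl⟩ ⟨m, hmdead⟩
  have hle : ∀ p : S × T, p ⊓ (x, y) ≤ (x, y) := fun p => inf_le_right
  have hcd : ∀ (p : Set.Iic ((x, y) : S × T)), (c p).1 ∈ deadSub M JS JT p := fun p => (c p).2
  have hc' : ∀ (p q : S × T) (hp : p ≤ (x, y)) (hq : q ≤ (x, y)) (h : p ≤ q),
      M.map h (c ⟨p, hp⟩).1 = (c ⟨q, hq⟩).1 := fun p q hp hq h =>
    congrArg Subtype.val (hc ⟨p, hp⟩ ⟨q, hq⟩ h)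
  let e : ∀ p, M.V p := fun p =>
    M.map (show p ⊓ (x, y) ≤ p from inf_le_left) (c ⟨p ⊓ (x, y), hle p⟩).1
  have he : ∀ (p q : S × T) (h : p ≤ q), M.map h (e p) = e q := by
    intro p q h
    have h' : p ⊓ (x, y) ≤ q ⊓ (x, y) := inf_le_inf_right _ h
    simp only [e]
    rw [map_map_apply, ← hc' _ _ (hle p) (hle q) h', map_map_apply]
  refine iso_of_family M hind (JS ×ˢ JT) ?_ ?_ _ (x, y) ⟨hxJ, hyJ⟩ e (fun p q h _ => he p q h) ?_ ?_
  · intro p q h hq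
    exact ⟨hJS _ _ h.1 hq.1, hJT _ _ h.2 hq.2⟩
  · intro p hp q hq
    refine ⟨p ⊔ q, ⟨?_, ?_⟩, le_sup_left, le_sup_right⟩
    · change p.1 ⊔ q.1 ∈ JS
      rcases le_total p.1 q.1 with h | h
      · rw [sup_eq_right.mpr h]; exact hq.1
      · rw [sup_eq_left.mpr h]; exact hp.1
    · change p.2 ⊔ q.2 ∈ JT
      rcases le_total p.2 q.2 with h | h
      · rw [sup_eq_right.mpr h]; exact hq.2
      · rw [sup_eq_left.mpr h]; exact hp.2
  · intro p q h _ hq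
    simp only [e]
    rw [map_map_apply]
    exact hcd ⟨p ⊓ (x, y), hle p⟩ q _ hq
  · rintro ⟨s, t⟩ hp hap
    have hea : e (x, y) = m := by
      have h1 := hc' _ _ (hle (x, y)) (le_refl (x, y)) inf_le_left
      exact h1.trans (congrArg Subtype.val hca)
    rw [← he (x, y) (s, t) hap, hea]
    exact hgood s hap.1 t hap.2 (hp.2 hap.2) (hp.1 hap.1)
end

section
/- Let k be a field, S and T totally ordered sets, and M a pointwise finite-dimensional persistence module over S × T such that for all x ≤ x' in S and y ≤ y' in T, with a = (x,y), b = (x,y'), c = (x',y), d = (x',y'), the sequence 0 → M_a → M_b ⊕ M_c → M_d → 0 is short exact. Then (Ker M^→) ∩ (Ker M^↑) = 0 and M = (Im M^←) + (Im M^↓), where these four submodules of M are defined pointwise by: (Im M^←)_{(p₁,p₂)} = ⋂_{q ≤ p₁} Im(M_{(q,p₂)} → M_{(p₁,p₂)}), (Im M^↓)_{(p₁,p₂)} = ⋂_{q ≤ p₂} Im(M_{(p₁,q)} → M_{(p₁,p₂)}), (Ker M^→)_{(p₁,p₂)} = ⋃_{q ≥ p₁} Ker(M_{(p₁,p₂)}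 → M_{(q,p₂)}), (Ker M^↑)_{(p₁,p₂)} = ⋃_{q ≥ p₂} Ker(M_{(p₁,p₂)} → M_{(p₁,q)}). -/
namespace PMod

/-- Short exactness of all rectangle sequences `0 → M_a → M_b ⊕ M_c → M_d → 0`. -/
def ShortExactAll {k : Type} [Field k] {S T : Type} [Preorder S] [Preorder T]
    (M : PersistenceModule k (S × T)) : Prop :=
  ∀ (x x' : S) (y y' : T) (hx : x ≤ x') (hy : y ≤ y'),
    (∀ ma : M.V (x, y),
      M.map (show (x, y) ≤ (x, y') from ⟨le_refl x, hy⟩) ma = 0 →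
      M.map (show (x, y) ≤ (x', y) from ⟨hx, le_refl y⟩) ma = 0 → ma = 0) ∧
    (∀ (mb : M.V (x, y')) (mc : M.V (x', y)),
      M.map (show (x, y') ≤ (x', y') from ⟨hx, le_refl y'⟩) mb =
        M.map (show (x', y) ≤ (x', y') from ⟨le_refl x', hy⟩) mc →
      ∃ ma : M.V (x, y),
        M.map (show (x, y) ≤ (x, y') from ⟨le_refl x, hy⟩) ma = mb ∧
        M.map (show (x, y) ≤ (x', y) from ⟨hx, le_refl y⟩) ma = mc) ∧
    (∀ md : M.V (x', y'), ∃ (mb : M.V (x, y')) (mc : M.V (x', y)),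
      M.map (show (x, y') ≤ (x', y') from ⟨hx, le_refl y'⟩) mb -
        M.map (show (x', y) ≤ (x', y') from ⟨le_refl x', hy⟩) mc = md)

/-- Membership in the submodule `(Im M^←)_p`. -/
def MemImLeft {k : Type} [Field k] {S T : Type} [Preorder S] [Preorder T]
    (M : PersistenceModule k (S × T)) (p : S × T) (m : M.V p) : Prop :=
  ∀ (q : S) (hq : q ≤ p.1), ∃ m' : M.V (q, p.2),
    M.map (show (q, p.2) ≤ p from ⟨hq, le_refl p.2⟩) m' = m

/-- Membership in the submodule `(Im M^↓)_p`. -/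
def MemImDown {k : Type} [Field k] {S T : Type} [Preorder S] [Preorder T]
    (M : PersistenceModule k (S × T)) (p : S × T) (m : M.V p) : Prop :=
  ∀ (q : T) (hq : q ≤ p.2), ∃ m' : M.V (p.1, q),
    M.map (show (p.1, q) ≤ p from ⟨le_refl p.1, hq⟩) m' = m

/-- Membership in the submodule `(Ker M^→)_p`. -/
def MemKerRight {k : Type} [Field k] {S T : Type} [Preorder S] [Preorder T]
    (M : PersistenceModule k (S × T)) (p : S × T) (m : M.V p) : Prop :=
  ∃ (q : S) (hq : p.1 ≤ q),
    M.map (show p ≤ (q, p.2) from ⟨hq, le_refl p.2⟩) m = 0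

/-- Membership in the submodule `(Ker M^↑)_p`. -/
def MemKerUp {k : Type} [Field k] {S T : Type} [Preorder S] [Preorder T]
    (M : PersistenceModule k (S × T)) (p : S × T) (m : M.V p) : Prop :=
  ∃ (q : T) (hq : p.2 ≤ q),
    M.map (show p ≤ (p.1, q) from ⟨le_refl p.1, hq⟩) m = 0

end PMod

/-- A monotone family of subspaces of a finite-dimensional space over a nonempty linear order
has a least member. -/
theorem exists_least_subspace {k V ι : Type} [Field k] [AddCommGroup V] [Module k V]
    [FiniteDimensional k V] [LinearOrder ι] [Nonempty ι] (f : ι → Submodule k V)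
    (hf : Monotone f) : ∃ i, ∀ j, f i ≤ f j := by
  obtain ⟨_, ⟨i, rfl⟩, hi⟩ := WellFounded.has_min
    (wellFounded_lt (α := Submodule k V)) (Set.range f) (Set.range_nonempty f)
  refine ⟨i, fun j => ?_⟩
  rcases le_total i j with h | h
  · exact hf h
  · by_contra hn
    exact hi (f j) ⟨j, rfl⟩ (lt_of_le_not_ge (hf h) hn)

open PMod in
/-- Lemma 4.5: for a pointwise finite-dimensional module with all rectangle sequences
short exact, `Ker M^→ ∩ Ker M^↑ = 0` and `M = Im M^← + Im M^↓`. -/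
theorem stmt15 {k : Type} [Field k] {S T : Type} [LinearOrder S] [LinearOrder T]
    (M : PersistenceModule k (S × T)) (hfd : ∀ p, FiniteDimensional k (M.V p))
    (hse : ShortExactAll M) :
    (∀ (p : S × T) (m : M.V p), MemKerRight M p m → MemKerUp M p m → m = 0) ∧
    (∀ (p : S × T) (m : M.V p), ∃ a b : M.V p,
      MemImLeft M p a ∧ MemImDown M p b ∧ m = a + b) := by
  refine ⟨?_, ?_⟩
  · rintro ⟨x, y⟩ m ⟨x', hx, h1⟩ ⟨y', hy, h2⟩
    exact (hse x x' y y' hx hy).1 m h2 h1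
  · rintro ⟨x', y'⟩ m
    haveI := hfd (x', y')
    haveI : Nonempty (Set.Iic x') := ⟨⟨x', le_rfl⟩⟩
    haveI : Nonempty (Set.Iic y') := ⟨⟨y', le_rfl⟩⟩
    obtain ⟨⟨x, hx⟩, hX⟩ := exists_least_subspace
      (fun q : Set.Iic x' => LinearMap.range
        (M.map (show (q.1, y') ≤ (x', y') from ⟨q.2, le_refl y'⟩))) (by
        rintro ⟨a, ha⟩ ⟨b, hb⟩ hab
        rintro _ ⟨v, rfl⟩
        refine ⟨M.map (show (a, y') ≤ (b, y') from ⟨hab, le_refl y'⟩) v, ?_⟩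
        rw [← LinearMap.comp_apply, ← M.map_trans])
    obtain ⟨⟨y, hy⟩, hY⟩ := exists_least_subspace
      (fun q : Set.Iic y' => LinearMap.range
        (M.map (show (x', q.1) ≤ (x', y') from ⟨le_refl x', q.2⟩))) (by
        rintro ⟨a, ha⟩ ⟨b, hb⟩ hab
        rintro _ ⟨v, rfl⟩
        refine ⟨M.map (show (x', a) ≤ (x', b) from ⟨le_refl x', hab⟩) v, ?_⟩
        rw [← LinearMap.comp_apply, ← M.map_trans])
    obtain ⟨mb, mc, h⟩ := (hse x x' y y' hx hy).2.2 m
    refine ⟨_, -_, fun q hq => hX ⟨q, hq⟩ ⟨mb, rfl⟩, fun q hq => ?_,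
      h.symm.trans (sub_eq_add_neg _ _)⟩
    exact neg_mem (hY ⟨q, hq⟩ ⟨mc, rfl⟩)
end
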